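/- arXiv:1006.2570 — 6 statements merged into one kernel-verified Lean document; each statement's English description precedes it below -/
import Mathlib

section
/- Let ∑_{i=1}^k εᵢ·2^{qᵢ} be a nonempty reduced binary sum without superfluous pairs, with value N and leading exponent q₁ ≥ 1. If ε₁ = 1 then N ≥ 2^{q₁−1} + 1, and if ε₁ = −1 then N ≤ −2^{q₁−1} − 1. -/
/-- A reduced binary sum has no superfluous pairs: no two consecutive terms satisfy
`q i = q (i+1) + 1` and `ε i = -ε (i+1)`. -/
def NoSuperfluousPairs (k : ℕ) (ε : Fin k → ℤ) (q : Fin k → ℕ) : Prop :=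
  ∀ (i : ℕ) (h : i + 1 < k),
    ¬(q ⟨i, Nat.lt_of_succ_lt h⟩ = q ⟨i + 1, h⟩ + 1 ∧
      ε ⟨i, Nat.lt_of_succ_lt h⟩ = -ε ⟨i + 1, h⟩)

/-!
Suppose the leading term is `2 ^ (p + 1)`. A term of exponent `p` has coefficient other than `-1`,
so it contributes nonnegatively, and the terms of exponent less than `p` contribute more than
`-2 ^ p` by the geometric sum. Hence `N > 2 ^ (p + 1) - 2 ^ p = 2 ^ p`. The other sign follows by
negating all coefficients.
-/

section SignedPowerSums

variable {ι : Type*} {ε : ι → ℤ} {q : ι → ℕ} {b m p : ℕ}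

theorem abs_sum_mul_pow_lt {s : Finset ι} (hb : 2 ≤ b) (hε : ∀ i ∈ s, |ε i| ≤ 1)
    (hq : Set.InjOn q s) (hm : ∀ i ∈ s, q i < m) :
    |∑ i ∈ s, ε i * (b : ℤ) ^ q i| < (b : ℤ) ^ m :=
  calc |∑ i ∈ s, ε i * (b : ℤ) ^ q i|
      ≤ ∑ i ∈ s, |ε i * (b : ℤ) ^ q i| := Finset.abs_sum_le_sum_abs _ _
    _ ≤ ∑ i ∈ s, (b : ℤ) ^ q i := by
        refine Finset.sum_le_sum fun i hi => ?_
        rw [abs_mul, abs_of_nonneg (by positivity : (0 : ℤ) ≤ (b : ℤ) ^ q i)]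
        exact mul_le_of_le_one_left (by positivity) (hε i hi)
    _ = ((∑ j ∈ s.image q, b ^ j : ℕ) : ℤ) := by
        simp [Finset.sum_image hq]
    _ < (b : ℤ) ^ m := by
        exact_mod_cast Nat.geomSum_lt hb (Finset.forall_mem_image.2 hm)

theorem neg_pow_lt_sum_mul_pow {s : Finset ι} (hb : 2 ≤ b) (hε : ∀ i ∈ s, |ε i| ≤ 1)
    (hq : Set.InjOn q s) (hle : ∀ i ∈ s, q i ≤ p) (htop : ∀ i ∈ s, q i = p → 0 ≤ ε i) :
    -(b : ℤ) ^ p < ∑ i ∈ s, ε i * (b : ℤ) ^ q i := by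
  rw [← Finset.sum_filter_add_sum_filter_not s (fun i => q i = p)]
  have top_nonneg : 0 ≤ ∑ i ∈ s with q i = p, ε i * (b : ℤ) ^ q i := by
    refine Finset.sum_nonneg fun i hi => ?_
    obtain ⟨his, hip⟩ := Finset.mem_filter.1 hi
    exact mul_nonneg (htop i his hip) (by positivity)
  have abs_lower_lt : |∑ i ∈ s with ¬q i = p, ε i * (b : ℤ) ^ q i| < (b : ℤ) ^ p := by
    refine abs_sum_mul_pow_lt hb (fun i hi => hε i (Finset.mem_filter.1 hi).1)
      (hq.mono (Finset.coe_subset.2 (Finset.filter_subset _ _))) fun i hi => ?_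
    obtain ⟨his, hip⟩ := Finset.mem_filter.1 hi
    exact lt_of_le_of_ne (hle i his) hip
  linarith [(abs_lt.1 abs_lower_lt).1]

variable [Fintype ι] {i₀ : ι}

theorem two_pow_lt_sum_of_leading_eq_one (hε : ∀ i, |ε i| ≤ 1) (hq : Function.Injective q)
    (hmax : ∀ i, q i ≤ q i₀) (hs : ∀ i, q i₀ = q i + 1 → ε i₀ ≠ -ε i)
    (hp : q i₀ = p + 1) (h₀ : ε i₀ = 1) :
    2 ^ p < ∑ i, ε i * 2 ^ q i := by
  classical
  have neg_lt_tail : -(2 : ℤ) ^ p < ∑ i ∈ Finset.univ.erase i₀, ε i * 2 ^ q i := by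
    refine neg_pow_lt_sum_mul_pow le_rfl (fun i _ => hε i) hq.injOn (fun i hi => ?_)
      fun i _ hip => ?_
    · have q_lt : q i < q i₀ := (hmax i).lt_of_ne (hq.ne (Finset.ne_of_mem_erase hi))
      omega
    · have ne_neg : ε i₀ ≠ -ε i := hs i (by omega)
      have neg_one_le : -1 ≤ ε i := (abs_le.1 (hε i)).1
      omega
  rw [← Finset.add_sum_erase _ _ (Finset.mem_univ i₀), h₀, hp, pow_succ]
  linarith

theorem reduced_no_superfluous_leading_bound_general (hε : ∀ i, |ε i| ≤ 1)
    (hq : Function.Injective q) (hmax : ∀ i, q i ≤ q i₀)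
    (hs : ∀ i, q i₀ = q i + 1 → ε i₀ ≠ -ε i) (hq₀ : 1 ≤ q i₀) :
    (ε i₀ = 1 → 2 ^ (q i₀ - 1) + 1 ≤ ∑ i, ε i * 2 ^ q i) ∧
    (ε i₀ = -1 → (∑ i, ε i * 2 ^ q i) ≤ -(2 ^ (q i₀ - 1)) - 1) := by
  have hp : q i₀ = q i₀ - 1 + 1 := (Nat.sub_add_cancel hq₀).symm
  refine ⟨fun h₀ => two_pow_lt_sum_of_leading_eq_one hε hq hmax hs hp h₀, fun h₀ => ?_⟩
  have two_pow_lt_neg : 2 ^ (q i₀ - 1) < ∑ i, -ε i * 2 ^ q i :=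
    two_pow_lt_sum_of_leading_eq_one (fun i => (abs_neg (ε i)).trans_le (hε i)) hq hmax
      (fun i hi => neg_injective.ne (hs i hi)) hp (neg_eq_iff_eq_neg.2 h₀)
  simp only [neg_mul, Finset.sum_neg_distrib] at two_pow_lt_neg
  linarith

end SignedPowerSums

theorem NoSuperfluousPairs.ne_neg_of_eq_add_one {k : ℕ} {ε : Fin k → ℤ} {q : Fin k → ℕ}
    (hs : NoSuperfluousPairs k ε q) (hq : StrictAnti q) {i j : Fin k} (hij : q i = q j + 1) :
    ε i ≠ -ε j := by
  have covBy : i ⋖ j := by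
    refine ⟨hq.lt_iff_gt.1 (by omega), fun l hil hlj => ?_⟩
    have q_lt_left : q l < q i := hq hil
    have right_lt_q : q j < q l := hq hlj
    omega
  obtain ⟨i, hi⟩ := i
  obtain ⟨j, hj⟩ := j
  obtain rfl : i + 1 = j := by simpa using covBy
  exact fun hneg => hs i hj ⟨hij, hneg⟩

/-- For a nonempty reduced binary sum without superfluous pairs, with value `N` and
leading exponent `q₁ ≥ 1`: if `ε₁ = 1` then `N ≥ 2^(q₁-1) + 1`, and if `ε₁ = -1`
then `N ≤ -2^(q₁-1) - 1`. -/
theorem reduced_no_superfluous_leading_bound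
    (k : ℕ) (hk : 0 < k) (ε : Fin k → ℤ) (q : Fin k → ℕ)
    (hε : ∀ i, ε i = 1 ∨ ε i = -1)
    (hq : StrictAnti q)
    (hs : NoSuperfluousPairs k ε q)
    (hq1 : 1 ≤ q ⟨0, hk⟩) :
    (ε ⟨0, hk⟩ = 1 → 2 ^ (q ⟨0, hk⟩ - 1) + 1 ≤ ∑ i, ε i * 2 ^ q i) ∧
    (ε ⟨0, hk⟩ = -1 → (∑ i, ε i * 2 ^ q i) ≤ -(2 ^ (q ⟨0, hk⟩ - 1)) - 1) :=
  reduced_no_superfluous_leading_bound_general (fun i => ((abs_eq zero_le_one).2 (hε i)).le)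
    hq.injective (fun i => hq.antitone (Nat.zero_le i)) (fun _ => hs.ne_neg_of_eq_add_one hq) hq1
end

section
/- A compact binary sum has the least possible number of terms among all binary sums with the same value: if N is a nonzero integer whose compact binary sum representation has k terms, and N = ∑_{j=1}^m δⱼ·2^{pⱼ} is any binary sum with value N (δⱼ ∈ {−1, 1}, exponents pⱼ ∈ ℕ arbitrary, repetitions allowed), then m ≥ k. -/
/-- A binary sum, as a list of (coefficient, exponent) pairs; its value. -/
def binVal (l : List (ℤ × ℕ)) : ℤ := (l.map fun p => p.1 * 2 ^ p.2).sum

/-- All coefficients belong to `{-1, 1}`. -/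
def GoodCoeffs (l : List (ℤ × ℕ)) : Prop := ∀ p ∈ l, p.1 = 1 ∨ p.1 = -1

/-- A binary sum is compact if its exponents are strictly decreasing with consecutive
gaps at least 2. -/
def Compact (l : List (ℤ × ℕ)) : Prop := l.Chain' fun a b => b.2 + 2 ≤ a.2

/-!
Stripping off the lowest binary digit suggests a weight on integers with `w (2 n) = w n` and
`w (2 n + 1) = min (w n) (w (n + 1)) + 1`: the last digit of an odd number is `1` or `-1`.
Adding `±2 ^ q` raises this weight by at most one, so it is a lower bound for the length of every
binary sum. In particular `w n` and `w (n + 1)` differ by at most one, so that `2 n` weighs no more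
than `2 n ± 1`. Hence the minimum is attained by the choice of last digit that leaves an even
quotient, i.e. `w (4 n ± 1) = w n + 1`. A compact sum makes exactly this choice at each of its
terms, so its length is its weight.
-/

/-- The signed binary weight of an integer: the least number of terms `±2 ^ q` summing to it,
computed digit by digit. The recursion for odd `n` would not terminate at `±1`, where the weight
is given directly. -/
def signedWeight (n : ℤ) : ℕ :=
  if n.natAbs ≤ 1 then n.natAbs
  else if n % 2 = 0 then signedWeight (n / 2)
  else min (signedWeight (n / 2)) (signedWeight (n / 2 + 1)) + 1
termination_by n.natAbs
decreasing_by all_goals omega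

section Weight

variable {ε : ℤ}

theorem signedWeight_zero : signedWeight 0 = 0 := by
  simp [signedWeight]

theorem signedWeight_two_mul (n : ℤ) : signedWeight (2 * n) = signedWeight n := by
  rcases eq_or_ne n 0 with rfl | hn
  · rfl
  · rw [signedWeight, if_neg (by omega), if_pos (by omega), Int.mul_ediv_cancel_left n two_ne_zero]

theorem signedWeight_two_mul_add_one (n : ℤ) :
    signedWeight (2 * n + 1) = min (signedWeight n) (signedWeight (n + 1)) + 1 := by
  by_cases hn : n = 0 ∨ n = -1
  · rcases hn with rfl | rfl <;> simp [signedWeight]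
  · rw [signedWeight, if_neg (by omega), if_neg (by omega),
      show (2 * n + 1) / 2 = n by omega]

theorem signedWeight_two_pow_mul (q : ℕ) (n : ℤ) :
    signedWeight (2 ^ q * n) = signedWeight n := by
  induction q with
  | zero => rw [pow_zero, one_mul]
  | succ q ih => rw [pow_succ', mul_assoc, signedWeight_two_mul, ih]

theorem signedWeight_add_one_le_and_le (n : ℤ) :
    signedWeight (n + 1) ≤ signedWeight n + 1 ∧ signedWeight n ≤ signedWeight (n + 1) + 1 := by
  by_cases hn : n = 0 ∨ n = -1
  · rcases hn with rfl | rfl <;> simp [signedWeight]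
  obtain ⟨m, hm⟩ := n.even_or_odd'
  have ih := signedWeight_add_one_le_and_le m
  have odd := signedWeight_two_mul_add_one m
  rcases hm with rfl | rfl
  · rw [signedWeight_two_mul]
    omega
  · rw [show 2 * m + 1 + 1 = 2 * (m + 1) by ring, signedWeight_two_mul]
    omega
termination_by n.natAbs
decreasing_by omega

theorem signedWeight_add_le (n : ℤ) (hε : ε = 1 ∨ ε = -1) :
    signedWeight (n + ε) ≤ signedWeight n + 1 := by
  rcases hε with rfl | rfl
  · exact (signedWeight_add_one_le_and_le n).1
  · simpa only [← sub_eq_add_neg, sub_add_cancel] using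
      (signedWeight_add_one_le_and_le (n - 1)).2

theorem signedWeight_add_mul_two_pow_le (n : ℤ) (hε : ε = 1 ∨ ε = -1) (q : ℕ) :
    signedWeight (n + ε * 2 ^ q) ≤ signedWeight n + 1 := by
  induction q generalizing n with
  | zero => simpa only [pow_zero, mul_one] using signedWeight_add_le n hε
  | succ q ih =>
    obtain ⟨m, rfl | rfl⟩ := n.even_or_odd'
    · rw [show 2 * m + ε * 2 ^ (q + 1) = 2 * (m + ε * 2 ^ q) by ring,
        signedWeight_two_mul, signedWeight_two_mul]
      exact ih m
    · rw [show 2 * m + 1 + ε * 2 ^ (q + 1) = 2 * (m + ε * 2 ^ q) + 1 by ring,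
        signedWeight_two_mul_add_one, signedWeight_two_mul_add_one, add_right_comm m]
      have := ih m
      have := ih (m + 1)
      omega

theorem signedWeight_le_two_mul_add (n : ℤ) (hε : ε = 1 ∨ ε = -1) :
    signedWeight n ≤ signedWeight (2 * n + ε) := by
  rcases hε with rfl | rfl
  · rw [signedWeight_two_mul_add_one]
    have := (signedWeight_add_one_le_and_le n).2
    omega
  · rw [show 2 * n + -1 = 2 * (n - 1) + 1 by ring, signedWeight_two_mul_add_one, sub_add_cancel]
    have := (signedWeight_add_one_le_and_le (n - 1)).1
    rw [sub_add_cancel] at this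
    omega

theorem signedWeight_four_mul_add (n : ℤ) (hε : ε = 1 ∨ ε = -1) :
    signedWeight (4 * n + ε) = signedWeight n + 1 := by
  have even_le_odd : signedWeight (2 * n) ≤ signedWeight (2 * n + ε) :=
    (signedWeight_two_mul n).trans_le (signedWeight_le_two_mul_add n hε)
  rcases hε with rfl | rfl
  · rw [show 4 * n + 1 = 2 * (2 * n) + 1 by ring, signedWeight_two_mul_add_one,
      min_eq_left even_le_odd, signedWeight_two_mul]
  · rw [show 4 * n + -1 = 2 * (2 * n + -1) + 1 by ring, signedWeight_two_mul_add_one,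
      neg_add_cancel_right, min_eq_right even_le_odd, signedWeight_two_mul]

end Weight

section BinarySum

variable {l : List (ℤ × ℕ)}

theorem binVal_cons (p : ℤ × ℕ) (l : List (ℤ × ℕ)) :
    binVal (p :: l) = p.1 * 2 ^ p.2 + binVal l := by
  simp only [binVal, List.map_cons, List.sum_cons]

theorem binVal_concat (l : List (ℤ × ℕ)) (p : ℤ × ℕ) :
    binVal (l ++ [p]) = binVal l + p.1 * 2 ^ p.2 := by
  simp only [binVal, List.map_append, List.map_singleton, List.sum_append, List.sum_singleton]

theorem two_pow_dvd_binVal {s : ℕ} (hs : ∀ p ∈ l, s ≤ p.2) : 2 ^ s ∣ binVal l :=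
  List.dvd_sum <| List.forall_mem_map.mpr fun p hp => (pow_dvd_pow 2 (hs p hp)).mul_left p.1

theorem compact_iff_pairwise : Compact l ↔ l.Pairwise fun a b => b.2 + 2 ≤ a.2 :=
  have : IsTrans (ℤ × ℕ) fun a b => b.2 + 2 ≤ a.2 := ⟨fun _ _ _ hab hbc => by omega⟩
  List.isChain_iff_pairwise

theorem compact_concat {p : ℤ × ℕ} :
    Compact (l ++ [p]) ↔ Compact l ∧ ∀ x ∈ l, p.2 + 2 ≤ x.2 := by
  simp only [compact_iff_pairwise, List.pairwise_append, List.pairwise_singleton,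
    List.forall_mem_singleton, true_and]

theorem signedWeight_binVal_le_length (hl : GoodCoeffs l) :
    signedWeight (binVal l) ≤ l.length := by
  induction l with
  | nil => exact signedWeight_zero.le
  | cons p t ih =>
    obtain ⟨hp, ht⟩ := List.forall_mem_cons.mp hl
    calc signedWeight (binVal (p :: t))
        = signedWeight (binVal t + p.1 * 2 ^ p.2) := by rw [binVal_cons, add_comm]
      _ ≤ signedWeight (binVal t) + 1 := signedWeight_add_mul_two_pow_le _ hp _
      _ ≤ t.length + 1 := Nat.succ_le_succ (ih ht)

theorem signedWeight_binVal_eq_length (hl : GoodCoeffs l) (hc : Compact l) :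
    signedWeight (binVal l) = l.length := by
  induction l using List.reverseRecOn with
  | nil => exact signedWeight_zero
  | append_singleton t p ih =>
    obtain ⟨ht, hp⟩ := List.forall_mem_append.mp hl
    obtain ⟨htc, hgap⟩ := compact_concat.mp hc
    obtain ⟨m, hm⟩ := two_pow_dvd_binVal hgap
    calc signedWeight (binVal (t ++ [p]))
        = signedWeight (2 ^ p.2 * (4 * m + p.1)) := by rw [binVal_concat, hm]; ring_nf
      _ = signedWeight m + 1 := by
        rw [signedWeight_two_pow_mul, signedWeight_four_mul_add m (hp p List.mem_cons_self)]
      _ = signedWeight (binVal t) + 1 := by rw [hm, signedWeight_two_pow_mul]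
      _ = (t ++ [p]).length := by rw [ih ht htc, List.length_append, List.length_singleton]

end BinarySum

/-- A compact binary sum has the least possible number of terms among all binary
sums (arbitrary exponents, repetitions allowed) with the same nonzero value. -/
theorem compact_binary_sum_minimal (N : ℤ) (hN : N ≠ 0)
    (lc : List (ℤ × ℕ)) (hc1 : GoodCoeffs lc) (hc2 : Compact lc) (hc3 : binVal lc = N)
    (l : List (ℤ × ℕ)) (hl1 : GoodCoeffs l) (hl2 : binVal l = N) :
    lc.length ≤ l.length := by
  calc lc.length = signedWeight (binVal lc) := (signedWeight_binVal_eq_length hc1 hc2).symm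
    _ = signedWeight (binVal l) := by rw [hc3, hl2]
    _ ≤ l.length := signedWeight_binVal_le_length hl1
end

section
/- For every n ≥ 4, every binary sum whose value equals the product ∏_{i=4}^{n} (tower(i−1) + 1) has at least 2^{n−3} terms; that is, if ∏_{i=4}^{n} (tower(i−1) + 1) = ∑_{j=1}^m εⱼ·2^{pⱼ} with εⱼ ∈ {−1, 1} and pⱼ ∈ ℕ (repetitions allowed), then m ≥ 2^{n−3}. -/
/-- The tower function: `tower 1 = 2` and `tower (j+1) = 2 ^ tower j`
(so `tower j` is a tower of `j` twos). -/
def tower : ℕ → ℕ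
  | 0 => 1
  | j + 1 => 2 ^ tower j

/-!
The non-adjacent form of an integer is its signed binary expansion in which no two consecutive
digits are nonzero. Adding `±2 ^ k` raises its weight, the number of its nonzero digits, by at most
one, so the weight of `N` bounds from below the length of every binary sum with value `N`. If
`3 * |A| < 2 ^ t`, the digits of `A` and of `2 ^ t * A` do not interfere, so multiplying `A` by
`2 ^ t + 1` doubles the weight; if `2 ≤ t 0` and the exponents `t i` at least double at each step,
then the partial products `∏ (2 ^ t i + 1)` satisfy this bound.
-/

/-- The number of nonzero digits in the non-adjacent form of an integer. An odd `N` is `4 * M ± 1`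
with `M = (N + 1) / 4` in both cases; its lowest two digits are then `0, ±1`, followed by those
of `M`. -/
def nafWeight (N : ℤ) : ℕ :=
  if N = 0 then 0
  else if N % 2 = 0 then nafWeight (N / 2)
  else nafWeight ((N + 1) / 4) + 1
termination_by N.natAbs
decreasing_by all_goals omega

@[elab_as_elim]
theorem naf_induction {motive : ℤ → Prop} (N : ℤ) (zero : motive 0)
    (two_mul : ∀ M, M ≠ 0 → motive M → motive (2 * M))
    (four_mul_add : ∀ M ε, ε = 1 ∨ ε = -1 → motive M → motive (4 * M + ε)) : motive N := by
  induction hn : N.natAbs using Nat.strong_induction_on generalizing N with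
  | _ n ih =>
    obtain rfl | ⟨M, hM, rfl⟩ | ⟨M, ε, hε, rfl⟩ : N = 0 ∨ (∃ M, M ≠ 0 ∧ N = 2 * M) ∨
        ∃ M ε, (ε = 1 ∨ ε = -1) ∧ N = 4 * M + ε := by
      by_cases h₀ : N = 0
      · exact .inl h₀
      by_cases h₂ : N % 2 = 0
      · exact .inr (.inl ⟨N / 2, by omega, by omega⟩)
      · exact .inr (.inr ⟨(N + 1) / 4, N - 4 * ((N + 1) / 4), by omega, by omega⟩)
    · exact zero
    · exact two_mul M hM (ih _ (by omega) M rfl)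
    · exact four_mul_add M ε hε (ih _ (by omega) M rfl)

theorem nafWeight_zero : nafWeight 0 = 0 := by
  rw [nafWeight, if_pos rfl]

theorem nafWeight_two_mul (N : ℤ) : nafWeight (2 * N) = nafWeight N := by
  obtain rfl | hN := eq_or_ne N 0
  · rfl
  · rw [nafWeight, if_neg (by omega), if_pos (by omega), Int.mul_ediv_cancel_left N two_ne_zero]

theorem nafWeight_four_mul (N : ℤ) : nafWeight (4 * N) = nafWeight N := by
  rw [show 4 * N = 2 * (2 * N) by ring, nafWeight_two_mul, nafWeight_two_mul]

theorem nafWeight_two_pow_mul (k : ℕ) (N : ℤ) : nafWeight (2 ^ k * N) = nafWeight N := by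
  induction k with
  | zero => rw [pow_zero, one_mul]
  | succ k ih => rw [pow_succ', mul_assoc, nafWeight_two_mul, ih]

theorem nafWeight_four_mul_add_sign {ε : ℤ} (hε : ε = 1 ∨ ε = -1) (N : ℤ) :
    nafWeight (4 * N + ε) = nafWeight N + 1 := by
  rw [nafWeight, if_neg (by omega), if_neg (by omega), show (4 * N + ε + 1) / 4 = N by omega]

theorem nafWeight_sign {ε : ℤ} (hε : ε = 1 ∨ ε = -1) : nafWeight ε = 1 := by
  simpa only [mul_zero, zero_add, nafWeight_zero] using nafWeight_four_mul_add_sign hε 0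

theorem nafWeight_two_mul_add_sign_le {ε : ℤ} (hε : ε = 1 ∨ ε = -1) (N : ℤ) :
    nafWeight (2 * N + ε) ≤ nafWeight N + 1 := by
  induction N using naf_induction with
  | zero => rw [mul_zero, zero_add, nafWeight_sign hε, nafWeight_zero]
  | two_mul M =>
    rw [show 2 * (2 * M) + ε = 4 * M + ε by ring, nafWeight_four_mul_add_sign hε, nafWeight_two_mul]
  | four_mul_add M δ hδ ih =>
    rw [nafWeight_four_mul_add_sign hδ]
    obtain rfl | rfl : δ = ε ∨ δ = -ε := by omega
    · rw [show 2 * (4 * M + δ) + δ = 4 * (2 * M + δ) + -δ by ring,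
        nafWeight_four_mul_add_sign (by omega)]
      omega
    · rw [show 2 * (4 * M + -ε) + ε = 4 * (2 * M) + -ε by ring,
        nafWeight_four_mul_add_sign hδ, nafWeight_two_mul]
      omega

theorem nafWeight_add_sign_le {ε : ℤ} (hε : ε = 1 ∨ ε = -1) (N : ℤ) :
    nafWeight (N + ε) ≤ nafWeight N + 1 := by
  cases N using naf_induction with
  | zero => rw [zero_add, nafWeight_sign hε, nafWeight_zero]
  | two_mul M =>
    rw [nafWeight_two_mul]
    exact nafWeight_two_mul_add_sign_le hε M
  | four_mul_add M δ hδ =>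
    rw [nafWeight_four_mul_add_sign hδ]
    obtain rfl | rfl : δ = ε ∨ δ = -ε := by omega
    · rw [show 4 * M + δ + δ = 2 * (2 * M + δ) by ring, nafWeight_two_mul]
      exact (nafWeight_two_mul_add_sign_le hδ M).trans (Nat.le_succ _)
    · rw [neg_add_cancel_right, nafWeight_four_mul]
      omega

theorem nafWeight_add_sign_mul_two_pow_le {ε : ℤ} (hε : ε = 1 ∨ ε = -1) (k : ℕ) (N : ℤ) :
    nafWeight (N + ε * 2 ^ k) ≤ nafWeight N + 1 := by
  induction N using naf_induction generalizing k with
  | zero =>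
    rw [zero_add, mul_comm, nafWeight_two_pow_mul, nafWeight_sign hε, nafWeight_zero]
  | two_mul M _ ih =>
    obtain _ | k := k
    · simpa only [pow_zero, mul_one] using nafWeight_add_sign_le hε (2 * M)
    · rw [show 2 * M + ε * 2 ^ (k + 1) = 2 * (M + ε * 2 ^ k) by ring, nafWeight_two_mul,
        nafWeight_two_mul]
      exact ih k
  | four_mul_add M δ hδ ih =>
    obtain _ | _ | k := k
    · simpa only [pow_zero, mul_one] using nafWeight_add_sign_le hε (4 * M + δ)
    · rw [nafWeight_four_mul_add_sign hδ]
      obtain rfl | rfl : δ = ε ∨ δ = -ε := by omega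
      · rw [show 4 * M + δ + δ * 2 ^ (0 + 1) = 4 * (M + δ) + -δ by ring,
          nafWeight_four_mul_add_sign (by omega)]
        exact Nat.succ_le_succ (nafWeight_add_sign_le hδ M)
      · rw [show 4 * M + -ε + ε * 2 ^ (0 + 1) = 4 * M + ε by ring, nafWeight_four_mul_add_sign hε]
        exact Nat.le_succ _
    · rw [show 4 * M + δ + ε * 2 ^ (k + 2) = 4 * (M + ε * 2 ^ k) + δ by ring,
        nafWeight_four_mul_add_sign hδ, nafWeight_four_mul_add_sign hδ]
      exact Nat.succ_le_succ (ih k)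

theorem nafWeight_binVal_le_length {l : List (ℤ × ℕ)} (hl : GoodCoeffs l) :
    nafWeight (binVal l) ≤ l.length := by
  induction l with
  | nil => exact nafWeight_zero.le
  | cons p l ih =>
    obtain ⟨hp, hl⟩ := List.forall_mem_cons.1 hl
    calc nafWeight (binVal (p :: l))
      _ = nafWeight (binVal l + p.1 * 2 ^ p.2) := by
        rw [binVal, List.map_cons, List.sum_cons, add_comm, binVal]
      _ ≤ nafWeight (binVal l) + 1 := nafWeight_add_sign_mul_two_pow_le hp p.2 (binVal l)
      _ ≤ (p :: l).length := Nat.succ_le_succ (ih hl)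

theorem nafWeight_add_two_pow_mul {t : ℕ} {A : ℤ} (hA : 3 * |A| < 2 ^ t) (B : ℤ) :
    nafWeight (A + 2 ^ t * B) = nafWeight A + nafWeight B := by
  rw [Int.abs_eq_natAbs] at hA
  induction A using naf_induction generalizing t with
  | zero => rw [zero_add, nafWeight_two_pow_mul, nafWeight_zero, zero_add]
  | two_mul M hM₀ ih =>
    obtain _ | t := t
    · omega
    have hM : 3 * (M.natAbs : ℤ) < 2 ^ t := by
      rw [pow_succ] at hA
      omega
    rw [show 2 * M + 2 ^ (t + 1) * B = 2 * (M + 2 ^ t * B) by ring, nafWeight_two_mul,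
      nafWeight_two_mul, ih hM]
  | four_mul_add M ε hε ih =>
    obtain _ | _ | t := t
    · omega
    · omega
    have hM : 3 * (M.natAbs : ℤ) < 2 ^ t := by
      -- The hypothesis leaves only `3 * |M| = 2 ^ t` to exclude.
      have three_not_dvd : ¬ (3 : ℤ) ∣ 2 ^ t := fun h ↦ by
        have := Int.prime_three.dvd_of_dvd_pow h
        omega
      rw [pow_add] at hA
      omega
    rw [show 4 * M + ε + 2 ^ (t + 2) * B = 4 * (M + 2 ^ t * B) + ε by ring,
      nafWeight_four_mul_add_sign hε, nafWeight_four_mul_add_sign hε, ih hM, Nat.add_right_comm]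

theorem nafWeight_mul_two_pow_add_one {t : ℕ} {A : ℤ} (hA : 3 * |A| < 2 ^ t) :
    nafWeight (A * (2 ^ t + 1)) = 2 * nafWeight A := by
  rw [show A * (2 ^ t + 1) = A + 2 ^ t * A by ring, nafWeight_add_two_pow_mul hA, two_mul]

theorem three_mul_prod_two_pow_add_one_lt {t : ℕ → ℕ} (ht₀ : 2 ≤ t 0)
    (ht : ∀ i, 2 * t i ≤ t (i + 1)) (k : ℕ) :
    3 * ∏ i ∈ Finset.range k, ((2 : ℤ) ^ t i + 1) < 2 ^ t k := by
  induction k with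
  | zero =>
    calc (3 : ℤ) * ∏ i ∈ Finset.range 0, (2 ^ t i + 1)
      _ < 2 ^ 2 := by norm_num
      _ ≤ 2 ^ t 0 := pow_le_pow_right₀ one_le_two ht₀
  | succ k ih =>
    calc 3 * ∏ i ∈ Finset.range (k + 1), ((2 : ℤ) ^ t i + 1)
      _ = (3 * ∏ i ∈ Finset.range k, (2 ^ t i + 1)) * (2 ^ t k + 1) := by
        rw [Finset.prod_range_succ, mul_assoc]
      _ ≤ (2 ^ t k - 1) * (2 ^ t k + 1) :=
        mul_le_mul_of_nonneg_right (Int.le_sub_one_of_lt ih) (by positivity)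
      _ < 2 ^ (2 * t k) := by
        rw [pow_mul']
        linarith
      _ ≤ 2 ^ t (k + 1) := pow_le_pow_right₀ one_le_two (ht k)

theorem nafWeight_prod_two_pow_add_one {t : ℕ → ℕ} (ht₀ : 2 ≤ t 0)
    (ht : ∀ i, 2 * t i ≤ t (i + 1)) (k : ℕ) :
    nafWeight (∏ i ∈ Finset.range k, (2 ^ t i + 1)) = 2 ^ k := by
  induction k with
  | zero => exact nafWeight_sign (.inl rfl)
  | succ k ih =>
    have hk : 3 * |∏ i ∈ Finset.range k, ((2 : ℤ) ^ t i + 1)| < 2 ^ t k := by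
      rw [abs_of_pos (Finset.prod_pos fun i _ ↦ by positivity)]
      exact three_mul_prod_two_pow_add_one_lt ht₀ ht k
    rw [Finset.prod_range_succ, nafWeight_mul_two_pow_add_one hk, ih, pow_succ']

theorem product_of_towers_needs_many_terms_general {t : ℕ → ℕ} (ht₀ : 2 ≤ t 0)
    (ht : ∀ i, 2 * t i ≤ t (i + 1)) (k : ℕ) {l : List (ℤ × ℕ)} (hl : GoodCoeffs l)
    (hval : binVal l = ∏ i ∈ Finset.range k, ((2 : ℤ) ^ t i + 1)) : 2 ^ k ≤ l.length := by
  rw [← nafWeight_prod_two_pow_add_one ht₀ ht k, ← hval]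
  exact nafWeight_binVal_le_length hl

theorem two_mul_tower_le_tower_succ (j : ℕ) : 2 * tower j ≤ tower (j + 1) := by
  rw [tower]
  obtain _ | m := tower j
  · exact Nat.zero_le _
  · rw [pow_succ']
    exact Nat.mul_le_mul_left 2 Nat.lt_two_pow_self

theorem prod_tower_add_one_eq (n : ℕ) :
    ∏ i ∈ Finset.Icc 4 n, ((tower (i - 1) : ℤ) + 1) =
      ∏ i ∈ Finset.range (n - 3), ((2 : ℤ) ^ tower (i + 2) + 1) := by
  rw [← Finset.Ico_add_one_right_eq_Icc, Finset.prod_Ico_eq_prod_range]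
  refine Finset.prod_congr (by congr 1) fun i _ ↦ ?_
  rw [show 4 + i - 1 = i + 2 + 1 by omega, tower, Nat.cast_pow, Nat.cast_ofNat]

/-- For every `n ≥ 4`, every binary sum whose value equals
`∏_{i=4}^{n} (tower (i-1) + 1)` has at least `2^(n-3)` terms. -/
theorem product_of_towers_needs_many_terms (n : ℕ) (hn : 4 ≤ n)
    (l : List (ℤ × ℕ)) (hl : GoodCoeffs l)
    (hval : binVal l = ∏ i ∈ Finset.Icc 4 n, ((tower (i - 1) : ℤ) + 1)) :
    2 ^ (n - 3) ≤ l.length :=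
  product_of_towers_needs_many_terms_general (t := fun i ↦ tower (i + 2)) (by decide)
    (fun i ↦ two_mul_tower_le_tower_succ (i + 2)) (n - 3) hl (hval.trans (prod_tower_add_one_eq n))
end

section
/- For every proper constant power circuit P there exists a proper reduced constant power circuit P′ equivalent to P (that is, ℰ(P′) = ℰ(P)) with |V(P′)| ≤ |V(P)| + 1. -/
/-- A constant power circuit: a finite nonempty DAG without multiple edges, with
edge labels in `{-1, 1}`, a nonempty set `M` of marked vertices with signs
`ν : M → {-1, 1}`, together with its evaluation function `eval`, which satisfies
the defining recursion: `eval v = 0` if `v` has no outgoing edges, and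
`eval v = 2 ^ (∑ edges e = v→w, μ(e) · eval w)` otherwise.

Vertices are `Fin n`; `lab u v = 0` means there is no edge `u → v`, and
`lab u v = ±1` means there is an edge `u → v` labelled `±1` (this encodes both the
edge set and the labelling `μ`, and there are no multiple edges by construction).
Acyclicity is expressed by well-foundedness of the child relation, which also makes
`eval` the unique function satisfying `evalSpec`. -/
structure PowerCircuit where
  n : ℕ
  npos : 0 < n
  lab : Fin n → Fin n → ℤ
  labValid : ∀ u v, lab u v = 0 ∨ lab u v = 1 ∨ lab u v = -1
  acyclic : WellFounded (fun u v : Fin n => lab v u ≠ 0)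
  M : Finset (Fin n)
  Mne : M.Nonempty
  nu : Fin n → ℤ
  nuValid : ∀ v ∈ M, nu v = 1 ∨ nu v = -1
  eval : Fin n → ℝ
  evalSpec : ∀ v, eval v =
    if ∀ w, lab v w = 0 then 0
    else (2 : ℝ) ^ (∑ w, (lab v w : ℝ) * eval w)

namespace PowerCircuit

/-- The value `ℰ(P) = ∑_{v ∈ M} ν(v) · ℰ(v)` of a constant power circuit. -/
noncomputable def value (P : PowerCircuit) : ℝ :=
  ∑ v ∈ P.M, (P.nu v : ℝ) * P.eval v

/-- A circuit is proper if every vertex evaluates to a natural number. -/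
def Proper (P : PowerCircuit) : Prop := ∀ v, ∃ m : ℕ, P.eval v = m

/-- `P` properly represents the integer `N`. -/
def Represents (P : PowerCircuit) (N : ℤ) : Prop := P.Proper ∧ P.value = N

/-- A zero vertex: a vertex with no outgoing edges. -/
def IsZeroVertex (P : PowerCircuit) (v : Fin P.n) : Prop := ∀ w, P.lab v w = 0

/-- The trivial circuit consists of a single (marked) vertex. -/
def Trivial (P : PowerCircuit) : Prop := P.n = 1

/-- Trimmed: every vertex is reachable from a marked vertex along a directed path. -/
def Trimmed (P : PowerCircuit) : Prop :=
  ∀ v, ∃ m ∈ P.M, Relation.ReflTransGen (fun a b => P.lab a b ≠ 0) m v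

/-- Standard form: trimmed, exactly one zero vertex, the zero vertex is unmarked
unless the circuit is trivial, and no vertex with more than one outgoing edge has
an edge into the zero vertex. -/
def StandardForm (P : PowerCircuit) : Prop :=
  P.Trimmed ∧
  (∃! z, P.IsZeroVertex z) ∧
  (P.Trivial ∨ ∀ z, P.IsZeroVertex z → z ∉ P.M) ∧
  (∀ v z, P.IsZeroVertex z → P.lab v z ≠ 0 → ∀ w, P.lab v w ≠ 0 → w = z)

/-- No redundant pair of edges: no two distinct edges `v → v₁`, `v → v₂` with
opposite labels and `ℰ(v₁) = ℰ(v₂)`. -/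
def NoRedundantPairs (P : PowerCircuit) : Prop :=
  ∀ v v₁ v₂ : Fin P.n, v₁ ≠ v₂ → P.lab v v₁ ≠ 0 → P.lab v v₂ ≠ 0 →
    P.lab v v₁ = -P.lab v v₂ → P.eval v₁ ≠ P.eval v₂

/-- No superfluous pair of edges: no two distinct edges `v → v₁`, `v → v₂` with
opposite labels and `ℰ(v₁) = 2 ℰ(v₂)`. -/
def NoSuperfluousPairs (P : PowerCircuit) : Prop :=
  ∀ v v₁ v₂ : Fin P.n, v₁ ≠ v₂ → P.lab v v₁ ≠ 0 → P.lab v v₂ ≠ 0 →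
    P.lab v v₁ = -P.lab v v₂ → P.eval v₁ ≠ 2 * P.eval v₂

/-- Reduced: standard form, distinct vertices have distinct evaluations, and no
redundant or superfluous pairs of edges. -/
def Reduced (P : PowerCircuit) : Prop :=
  P.StandardForm ∧ (∀ v₁ v₂ : Fin P.n, P.eval v₁ = P.eval v₂ → v₁ = v₂) ∧
  P.NoRedundantPairs ∧ P.NoSuperfluousPairs

/-- Normal form: proper and reduced; for every vertex all of whose out-edges lead
to non-zero vertices, the numbers `log₂ ℰ(β(e))` pairwise differ by at least `2`;
and, unless the circuit is trivial, the numbers `log₂ ℰ(v)`, `v ∈ M`, pairwise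
differ by at least `2`. -/
def NormalForm (P : PowerCircuit) : Prop :=
  P.Proper ∧ P.Reduced ∧
  (∀ v : Fin P.n, (∀ w, P.lab v w ≠ 0 → ¬P.IsZeroVertex w) →
    ∀ w₁ w₂, P.lab v w₁ ≠ 0 → P.lab v w₂ ≠ 0 → w₁ ≠ w₂ →
      2 ≤ |Real.logb 2 (P.eval w₁) - Real.logb 2 (P.eval w₂)|) ∧
  (P.Trivial ∨ ∀ v₁ ∈ P.M, ∀ v₂ ∈ P.M, v₁ ≠ v₂ →
      2 ≤ |Real.logb 2 (P.eval v₁) - Real.logb 2 (P.eval v₂)|)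

/-- Isomorphism of constant power circuits: a bijection of vertices preserving
edges with their labels, marked vertices, and the signs of marked vertices. -/
def Isomorphic (P Q : PowerCircuit) : Prop :=
  ∃ φ : Fin P.n ≃ Fin Q.n,
    (∀ u v, Q.lab (φ u) (φ v) = P.lab u v) ∧
    (∀ v, φ v ∈ Q.M ↔ v ∈ P.M) ∧
    (∀ v ∈ P.M, Q.nu (φ v) = P.nu v)

/-- The number of edges of a power circuit. -/
def edgeCount (P : PowerCircuit) : ℕ :=
  (Finset.univ.filter fun p : Fin P.n × Fin P.n => P.lab p.1 p.2 ≠ 0).card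

end PowerCircuit

/-!
The nonzero vertices of a proper circuit with `n` vertices have evaluations `2 ^ x v`, where every
exponent `x v`, as well as the value of the circuit, is a signed sum of powers `2 ^ x w`. At most
`n - 1` exponents occur, possibly with repetitions. Adding up equal powers with binary carries gives
a set `E` of at most `n - 1` exponents such that every signed sum of the original powers is a signed
sum of distinct powers `2 ^ y`, `y ∈ E`.

The set `E` may contain an exponent `y = x v + T` reached only by carries, which need not be such a
signed sum itself. Carrying over `T` positions merges `2 ^ T` powers, so then `|E| + T ≤ n`, and
there is room to add the smallest `n - |E|` exponents missing from `E`. Each of them allows for one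
more increment by `1`, and `T` increments lead from `x v` to `y`. The enlarged set has at most `n`
elements, and each of them is a signed sum of powers `2 ^ y` with `y` in the set.

Finally, every such exponent and the value are written without superfluous pairs, by means of
`2 ^ (i + 1) - 2 ^ i = 2 ^ i`. The exponents occurring in the expansion of `x` are then smaller
than `x`, so the expansions are the edges of a circuit. Restricted to the part reachable from the
marked vertices, and with a zero vertex added, it is reduced.
-/

namespace PowerCircuit

open Finset
open scoped Pointwise

/-! ### Signed binary expansions -/

/-- The integer `∑ i, δ i * 2 ^ i` with binary digits `δ`. -/
noncomputable def binaryValue : (ℕ →₀ ℤ) →ₗ[ℤ] ℤ :=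
  Finsupp.linearCombination ℤ fun i => 2 ^ i

/-- The signed binary digit sequences, with digits in `{-1, 0, 1}`, supported in `E`. In a power
circuit they are the labels of the edges leaving a vertex, where `i ∈ E` stands for a vertex of
evaluation `2 ^ i`. -/
def signedExpansions (E : Finset ℕ) : Set (ℕ →₀ ℤ) :=
  {δ | (∀ i, |δ i| ≤ 1) ∧ δ.support ⊆ E}

/-- The integers that are sums of signed powers `± 2 ^ i` for distinct `i ∈ E`. -/
def signedSums (E : Finset ℕ) : Set ℤ :=
  binaryValue '' signedExpansions E

variable {E F : Finset ℕ} {δ : ℕ →₀ ℤ} {N : ℤ}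

theorem binaryValue_single (i : ℕ) (d : ℤ) : binaryValue (Finsupp.single i d) = d * 2 ^ i := by
  simp [binaryValue]

theorem binaryValue_eq_sum (h : δ.support ⊆ E) : binaryValue δ = ∑ i ∈ E, δ i * 2 ^ i := by
  rw [binaryValue, Finsupp.linearCombination_apply, Finsupp.sum_of_support_subset _ h _ (by simp)]
  simp only [smul_eq_mul]

theorem abs_binaryValue_le (hδ : δ ∈ signedExpansions E) :
    |binaryValue δ| ≤ ∑ i ∈ E, (2 : ℤ) ^ i := by
  rw [binaryValue_eq_sum hδ.2]
  refine (abs_sum_le_sum_abs _ _).trans (sum_le_sum fun i _ => ?_)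
  rw [abs_mul, abs_pow, abs_two]
  exact mul_le_of_le_one_left (by positivity) (hδ.1 i)

theorem sum_range_two_pow_lt (n : ℕ) : ∑ i ∈ range n, (2 : ℤ) ^ i < 2 ^ n := by
  exact_mod_cast Nat.geomSum_lt le_rfl fun i (hi : i ∈ range n) => mem_range.1 hi

theorem signedSums_mono (h : E ⊆ F) : signedSums E ⊆ signedSums F :=
  Set.image_mono fun _ hδ => ⟨hδ.1, hδ.2.trans h⟩

theorem signedSums_union (h : Disjoint E F) :
    signedSums (E ∪ F) = signedSums E + signedSums F := by
  ext N
  constructor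
  · rintro ⟨δ, ⟨hδ, hEF⟩, rfl⟩
    refine ⟨_, ⟨δ.filter (· ∈ E), ⟨fun i => ?_, fun i hi => ?_⟩, rfl⟩,
      _, ⟨δ.filter (· ∉ E), ⟨fun i => ?_, fun i hi => ?_⟩, rfl⟩, ?_⟩
    · rw [Finsupp.filter_apply]
      split_ifs <;> simp [hδ]
    · exact (mem_filter.1 hi).2
    · rw [Finsupp.filter_apply]
      split_ifs <;> simp [hδ]
    · obtain ⟨hi, hiE⟩ := mem_filter.1 hi
      exact (mem_union.1 (hEF hi)).resolve_left hiE
    · simp only [← map_add, Finsupp.filter_add_filter_not]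
  · rintro ⟨_, ⟨δ, ⟨hδ, hE⟩, rfl⟩, _, ⟨η, ⟨hη, hF⟩, rfl⟩, rfl⟩
    refine ⟨δ + η, ⟨fun i => ?_, ?_⟩, map_add ..⟩
    · by_cases hi : i ∈ E
      · have : η i = 0 := Finsupp.notMem_support_iff.1 fun h' => disjoint_left.1 h hi (hF h')
        simpa [this] using hδ i
      · have : δ i = 0 := Finsupp.notMem_support_iff.1 fun h' => hi (hE h')
        simpa [this] using hη i
    · exact Finsupp.support_add.trans (union_subset_union hE hF)

theorem mul_two_pow_mem_signedSums_singleton {d : ℤ} (hd : |d| ≤ 1) (i : ℕ) :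
    d * 2 ^ i ∈ signedSums {i} := by
  refine ⟨Finsupp.single i d, ⟨fun j => ?_, Finsupp.support_single_subset⟩, binaryValue_single i d⟩
  rw [Finsupp.single_apply]
  split_ifs <;> simp [hd]

theorem sum_mul_two_pow_mem_signedSums {d : ℤ} (hd : |d| ≤ 1) (E : Finset ℕ) :
    d * ∑ i ∈ E, 2 ^ i ∈ signedSums E := by
  induction E using Finset.induction with
  | empty => exact ⟨0, ⟨by simp, by simp⟩, by simp⟩
  | insert i E hi ih =>
    rw [sum_insert hi, mul_add, insert_eq, signedSums_union (disjoint_singleton_left.2 hi)]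
    exact Set.add_mem_add (mul_two_pow_mem_signedSums_singleton hd i) ih

theorem mem_signedSums_range {n : ℕ} (h : |N| < 2 ^ n) : N ∈ signedSums (range n) := by
  have hbits : N.natAbs.bitIndices.toFinset ⊆ range n := fun i hi => by
    have hle : 2 ^ i ≤ N.natAbs := Nat.two_pow_le_of_mem_bitIndices (List.mem_toFinset.1 hi)
    have hlt : N.natAbs < 2 ^ n := by zify; exact h
    exact mem_range.2 ((Nat.pow_lt_pow_iff_right one_lt_two).1 (hle.trans_lt hlt))
  have hsign : |N.sign| ≤ 1 := Int.abs_le_one_iff.2 (by have := Int.sign_trichotomy N; tauto)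
  have hN : N.sign * ∑ i ∈ N.natAbs.bitIndices.toFinset, 2 ^ i = N := by
    conv_rhs => rw [← Int.sign_mul_natAbs N, ← sum_toFinset_bitIndices_two_pow N.natAbs]
    push_cast
    rfl
  rw [← hN]
  exact signedSums_mono hbits (sum_mul_two_pow_mem_signedSums hsign _)

/-- Each exponent below `J` missing from `E` makes room for one more increment. -/
theorem add_natCast_mem_signedSums_union_range (hN : N ∈ signedSums E) {J t : ℕ}
    (ht : t ≤ #(range J \ E)) : N + t ∈ signedSums (E ∪ range J) := by
  rw [← sdiff_union_inter E (range J),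
    signedSums_union (disjoint_sdiff_inter E (range J))] at hN
  obtain ⟨high, hhigh, low, hlow, rfl⟩ := hN
  have hlow_abs : |low| ≤ ∑ i ∈ E ∩ range J, (2 : ℤ) ^ i := by
    obtain ⟨δ, hδ, rfl⟩ := hlow
    exact abs_binaryValue_le hδ
  have ht_le : (t : ℤ) ≤ ∑ i ∈ range J \ E, (2 : ℤ) ^ i := by
    calc (t : ℤ) ≤ #(range J \ E) • (1 : ℤ) := by simpa using ht
      _ ≤ ∑ i ∈ range J \ E, (2 : ℤ) ^ i :=
        card_nsmul_le_sum _ _ _ fun i _ => one_le_pow₀ one_le_two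
  have hsum := sum_inter_add_sum_sdiff (range J) E fun i => (2 : ℤ) ^ i
  rw [inter_comm] at hsum
  have hlt : |low + t| < 2 ^ J := by
    have := abs_add_le low t
    rw [Nat.abs_cast] at this
    linarith [sum_range_two_pow_lt J]
  rw [add_assoc, ← sdiff_union_self_eq_union, signedSums_union sdiff_disjoint]
  exact Set.add_mem_add hhigh (mem_signedSums_range hlt)

/-- A digit sequence without adjacent opposite digits, that is, one whose edges contain no
superfluous pair. -/
def IsCompactExpansion (δ : ℕ →₀ ℤ) : Prop :=
  ∀ i, δ i ≠ 0 → δ (i + 1) ≠ -δ i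

/-- `2 ^ (i + 1) - 2 ^ i = 2 ^ i` removes a superfluous pair. -/
theorem exists_support_ssubset_of_superfluous (hδ : δ ∈ signedExpansions E) {i : ℕ}
    (hi : δ i ≠ 0) (hsucc : δ (i + 1) = -δ i) :
    ∃ η ∈ signedExpansions E, binaryValue η = binaryValue δ ∧ η.support ⊂ δ.support := by
  let η := δ + Finsupp.single (i + 1) (δ i) + Finsupp.single i (-2 * δ i)
  have hη_self : η i = -δ i := by simp [η]; ring
  have hη_succ : η (i + 1) = 0 := by simp [η, hsucc]
  have hη_ne : ∀ j, j ≠ i → j ≠ i + 1 → η j = δ j := fun j h h' => by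
    simp [η, h.symm, h'.symm]
  have hsub : η.support ⊆ δ.support := fun j hj => by
    rw [Finsupp.mem_support_iff] at hj ⊢
    rcases eq_or_ne j i with rfl | hji
    · exact hi
    · exact hη_ne j hji (fun h => hj (h ▸ hη_succ)) ▸ hj
  have hsucc_mem : i + 1 ∈ δ.support := by simpa [hsucc] using hi
  refine ⟨η, ⟨fun j => ?_, hsub.trans hδ.2⟩, ?_,
    (ssubset_iff_of_subset hsub).2 ⟨i + 1, hsucc_mem, by simp [hη_succ]⟩⟩
  · rcases eq_or_ne j i with rfl | hji
    · simpa [hη_self] using hδ.1 j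
    rcases eq_or_ne j (i + 1) with rfl | hji'
    · simp [hη_succ]
    · exact hη_ne j hji hji' ▸ hδ.1 j
  · simp only [η, map_add, binaryValue_single]
    ring

theorem exists_isCompactExpansion (hN : N ∈ signedSums E) :
    ∃ δ ∈ signedExpansions E, IsCompactExpansion δ ∧ binaryValue δ = N := by
  obtain ⟨δ, ⟨hδ, hδN⟩, hmin⟩ := exists_minimalFor_of_wellFoundedLT
    (fun δ => δ ∈ signedExpansions E ∧ binaryValue δ = N) Finsupp.support hN
  refine ⟨δ, hδ, fun i hi hsucc => ?_, hδN⟩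
  obtain ⟨η, hη, hηδ, hlt⟩ := exists_support_ssubset_of_superfluous hδ hi hsucc
  exact hlt.2 (hmin ⟨hη, hηδ.trans hδN⟩ hlt.1)

theorem erase_mem_signedExpansions {n : ℕ} (hδ : δ ∈ signedExpansions (range (n + 1))) :
    δ.erase n ∈ signedExpansions (range n) := by
  refine ⟨fun i => ?_, ?_⟩
  · rw [Finsupp.erase_apply]
    split_ifs <;> simp [hδ.1 i]
  · rw [Finsupp.support_erase, ← subset_insert_iff, ← range_add_one]
    exact hδ.2

theorem binaryValue_eq_add_erase (δ : ℕ →₀ ℤ) (n : ℕ) :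
    binaryValue δ = δ n * 2 ^ n + binaryValue (δ.erase n) := by
  rw [← binaryValue_single, ← map_add, Finsupp.single_add_erase]

theorem neg_two_pow_lt_two_mul_binaryValue {n : ℕ} (hδ : δ ∈ signedExpansions (range n))
    (htop : ∀ s, s + 1 = n → 0 ≤ δ s) : -2 ^ n < 2 * binaryValue δ := by
  cases n with
  | zero =>
    have : δ = 0 := Finsupp.support_eq_empty.1 (subset_empty.1 hδ.2)
    simp [this]
  | succ s =>
    have hlow := neg_le_of_abs_le (abs_binaryValue_le (erase_mem_signedExpansions hδ))
    have hhigh : 0 ≤ δ s * 2 ^ s := mul_nonneg (htop s rfl) (by positivity)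
    rw [binaryValue_eq_add_erase δ s, pow_succ]
    linarith [sum_range_two_pow_lt s]

theorem neg_mem_signedExpansions (hδ : δ ∈ signedExpansions E) : -δ ∈ signedExpansions E :=
  ⟨fun i => by simpa using hδ.1 i, by simpa using hδ.2⟩

theorem IsCompactExpansion.neg (hc : IsCompactExpansion δ) : IsCompactExpansion (-δ) :=
  fun i hi => by simpa using fun h => hc i (by simpa using hi) (by simpa using congrArg Neg.neg h)

theorem IsCompactExpansion.two_pow_lt_two_mul_abs (hc : IsCompactExpansion δ) {t : ℕ}
    (hδ : δ ∈ signedExpansions (range (t + 1))) (ht : δ t ≠ 0) :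
    2 ^ t < 2 * |binaryValue δ| := by
  wlog hone : δ t = 1 generalizing δ
  · have hneg : δ t = -1 := by have := Int.abs_le_one_iff.1 (hδ.1 t); tauto
    simpa using this hc.neg (neg_mem_signedExpansions hδ) (by simpa using ht) (by simp [hneg])
  have htop : ∀ s, s + 1 = t → 0 ≤ δ.erase t s := by
    rintro s rfl
    rw [Finsupp.erase_ne s.lt_succ_self.ne]
    by_contra! hs
    have hs1 : δ s = -1 := by have := abs_le.1 (hδ.1 s); omega
    exact hc s hs.ne (by rw [hone, hs1, neg_neg])
  have hlow := neg_two_pow_lt_two_mul_binaryValue (erase_mem_signedExpansions hδ) htop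
  calc (2 : ℤ) ^ t < 2 * (δ t * 2 ^ t + binaryValue (δ.erase t)) := by rw [hone]; linarith
    _ ≤ 2 * |binaryValue δ| := by rw [← binaryValue_eq_add_erase]; gcongr; exact le_abs_self _

/-- This is what makes a circuit with compact edge labels acyclic. -/
theorem IsCompactExpansion.lt_of_ne_zero (hc : IsCompactExpansion δ) (hδ : ∀ i, |δ i| ≤ 1)
    {x y : ℕ} (hx : binaryValue δ = x) (hy : δ y ≠ 0) : y < x := by
  have hne : δ.support.Nonempty := ⟨y, Finsupp.mem_support_iff.2 hy⟩
  set t := δ.support.max' hne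
  have ht : δ ∈ signedExpansions (range (t + 1)) :=
    ⟨hδ, fun i hi => mem_range_succ_iff.2 (le_max' _ i hi)⟩
  have hlt := hc.two_pow_lt_two_mul_abs ht (Finsupp.mem_support_iff.1 (max'_mem _ hne))
  rw [hx, Nat.abs_cast] at hlt
  have hyt : y ≤ t := le_max' _ y (Finsupp.mem_support_iff.2 hy)
  have htx : 2 ^ t < 2 ^ x :=
    lt_of_lt_of_le (by exact_mod_cast hlt) (Nat.mul_le_pow (by norm_num) x)
  exact hyt.trans_lt ((Nat.pow_lt_pow_iff_right one_lt_two).1 htx)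

/-! ### Carries -/

/-- The carry into position `i` when `c j` powers `2 ^ j` are added for each `j`. -/
def carry (c : ℕ → ℕ) : ℕ → ℕ
  | 0 => 0
  | i + 1 => (c i + carry c i) / 2

/-- The positions below `n` that are reached by one of the `c i` powers `2 ^ i` or by a carry. -/
def carrySupport (c : ℕ → ℕ) (n : ℕ) : Finset ℕ :=
  {i ∈ range n | 1 ≤ c i + carry c i}

section Carry

variable {c : ℕ → ℕ}

theorem carrySupport_succ (n : ℕ) : carrySupport c (n + 1) =
    if 1 ≤ c n + carry c n then insert n (carrySupport c n) else carrySupport c n := by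
  rw [carrySupport, range_add_one, filter_insert, carrySupport]

theorem notMem_carrySupport_self (n : ℕ) : n ∉ carrySupport c n := by
  simp [carrySupport]

theorem carry_add_le {L : ℕ} (hc : ∀ i, L ≤ i → c i = 0) (k : ℕ) :
    carry c (L + k) ≤ carry c L - k := by
  induction k with
  | zero => rfl
  | succ k ih =>
    rw [← add_assoc, carry, hc (L + k) (by lia)]
    lia

theorem exists_carry_eq_zero {L : ℕ} (hc : ∀ i, L ≤ i → c i = 0) : ∃ n ≥ L, carry c n = 0 :=
  ⟨L + carry c L, by lia, by simpa using carry_add_le hc (carry c L)⟩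

theorem exists_digit_add_two_mul (z : ℤ) :
    ∃ d β : ℤ, z = d + 2 * β ∧ |d| ≤ 1 ∧ 2 * |β| ≤ |z| :=
  ⟨z.tmod 2, z.tdiv 2, (Int.tmod_add_mul_tdiv z 2).symm, by grind, by grind⟩

theorem exists_sub_mul_two_pow_mem_signedSums_carrySupport {κ : ℕ → ℤ} (hκ : ∀ i, |κ i| ≤ c i)
    (n : ℕ) : ∃ β : ℤ, |β| ≤ carry c n ∧
      ∑ i ∈ range n, κ i * 2 ^ i - β * 2 ^ n ∈ signedSums (carrySupport c n) := by
  induction n with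
  | zero => exact ⟨0, by simp, 0, ⟨by simp, by simp⟩, by simp⟩
  | succ n ih =>
    obtain ⟨β, hβ, hmem⟩ := ih
    have hdigit : |κ n + β| ≤ c n + carry c n := (abs_add_le _ _).trans (add_le_add (hκ n) hβ)
    obtain ⟨d, β', hsum, hd, hβ'⟩ := exists_digit_add_two_mul (κ n + β)
    refine ⟨β', by rw [carry]; lia, ?_⟩
    have hstep : ∑ i ∈ range (n + 1), κ i * 2 ^ i - β' * 2 ^ (n + 1) =
        d * 2 ^ n + (∑ i ∈ range n, κ i * 2 ^ i - β * 2 ^ n) := by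
      rw [sum_range_succ]
      linear_combination hsum * 2 ^ n
    rw [hstep, carrySupport_succ]
    split_ifs with hn
    · rw [insert_eq, signedSums_union (disjoint_singleton_left.2 (notMem_carrySupport_self n))]
      exact Set.add_mem_add (mul_two_pow_mem_signedSums_singleton hd n) hmem
    · have hz : κ n + β = 0 := abs_nonpos_iff.1 (by lia)
      have hβ0 : β' = 0 := abs_nonpos_iff.1 (by rw [hz, abs_zero] at hβ'; lia)
      have hd0 : d = 0 := by linarith
      simpa [hd0] using hmem

theorem card_carrySupport_succ_add_carry (n : ℕ) :
    #(carrySupport c (n + 1)) + carry c (n + 1) + (c n + carry c n - 1) / 2 =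
      #(carrySupport c n) + carry c n + c n := by
  rw [carrySupport_succ, carry]
  split_ifs with h
  · rw [card_insert_of_notMem (notMem_carrySupport_self n)]
    lia
  · lia

theorem card_carrySupport_add_carry_le (n : ℕ) :
    #(carrySupport c n) + carry c n ≤ ∑ i ∈ range n, c i := by
  induction n with
  | zero => simp [carrySupport, carry]
  | succ n ih =>
    rw [sum_range_succ]
    have := card_carrySupport_succ_add_carry (c := c) n
    lia

/-- If `2 ^ T` powers `2 ^ x` meet at position `x`, then merging them wastes at least `T - 1`. -/
theorem card_carrySupport_add_carry_add_le {x T n : ℕ} (hT : 2 ^ T ≤ c x + carry c x)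
    (hxn : x < n) :
    #(carrySupport c n) + carry c n + T ≤ ∑ i ∈ range n, c i + 1 := by
  induction n, hxn using Nat.le_induction with
  | base =>
    rw [sum_range_succ]
    have := card_carrySupport_add_carry_le (c := c) x
    have := card_carrySupport_succ_add_carry (c := c) x
    have : 2 * T ≤ 2 ^ T := Nat.mul_le_pow (by norm_num) T
    lia
  | succ n hn ih =>
    rw [sum_range_succ]
    have := card_carrySupport_succ_add_carry (c := c) n
    lia

/-- A carry of at least `2 ^ k` is produced by at least `2 ^ (k + 1)` powers in the position
below. -/
theorem exists_carry_origin {y k : ℕ} (h : 2 ^ k ≤ c y + carry c y) :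
    ∃ x T, x + T = y ∧ 1 ≤ c x ∧ 2 ^ (k + T) ≤ c x + carry c x := by
  induction y generalizing k with
  | zero =>
    have : 1 ≤ 2 ^ k := Nat.one_le_two_pow
    exact ⟨0, 0, rfl, this.trans h, h⟩
  | succ y ih =>
    by_cases hc : 1 ≤ c (y + 1)
    · exact ⟨y + 1, 0, rfl, hc, h⟩
    · have hy : 2 ^ (k + 1) ≤ c y + carry c y := by
        rw [carry] at h
        rw [pow_succ]
        lia
      obtain ⟨x, T, rfl, hx, hxT⟩ := ih hy
      exact ⟨x, T + 1, by ring, hx, by rwa [show k + (T + 1) = k + 1 + T by ring]⟩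

end Carry

section Family

variable {ι : Type*} [Fintype ι]

/-- The integers `∑ i, ε i * 2 ^ x i` with `ε i ∈ {-1, 0, 1}`: a family `x`, unlike the finite set
in `signedSums`, may repeat exponents. -/
def familySignedSums (x : ι → ℕ) : Set ℤ :=
  {N | ∃ ε : ι → ℤ, (∀ i, |ε i| ≤ 1) ∧ ∑ i, ε i * 2 ^ x i = N}

/-- The number of occurrences of each exponent in the family `x`. -/
def multiplicity (x : ι → ℕ) (i : ℕ) : ℕ :=
  #{k | x k = i}

variable {x : ι → ℕ} {n : ℕ}

theorem sum_range_multiplicity (hx : ∀ k, x k < n) :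
    ∑ i ∈ range n, multiplicity x i = Fintype.card ι :=
  (card_eq_sum_card_fiberwise fun k _ => by simpa using hx k).symm

theorem familySignedSums_subset_signedSums_carrySupport (hx : ∀ k, x k < n)
    (hn : carry (multiplicity x) n = 0) :
    familySignedSums x ⊆ signedSums (carrySupport (multiplicity x) n) := by
  rintro _ ⟨ε, hε, rfl⟩
  have hκ : ∀ i, |∑ k with x k = i, ε k| ≤ multiplicity x i := fun i => by
    calc |∑ k with x k = i, ε k| ≤ ∑ k with x k = i, |ε k| := abs_sum_le_sum_abs _ _
      _ ≤ multiplicity x i • 1 := sum_le_card_nsmul _ _ _ fun k _ => hε k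
      _ = multiplicity x i := by simp
  obtain ⟨β, hβ, hmem⟩ := exists_sub_mul_two_pow_mem_signedSums_carrySupport hκ n
  have hβ0 : β = 0 := by simpa [hn] using hβ
  have hsum : ∑ k, ε k * 2 ^ x k = ∑ i ∈ range n, (∑ k with x k = i, ε k) * 2 ^ i := by
    rw [← sum_fiberwise_of_maps_to (t := range n) (g := x) fun k _ => mem_range.2 (hx k)]
    refine sum_congr rfl fun i _ => ?_
    rw [sum_mul]
    exact sum_congr rfl fun k hk => by rw [(mem_filter.1 hk).2]
  simpa [hsum, hβ0] using hmem

theorem exists_add_eq_of_mem_carrySupport (hx : ∀ k, x k < n) {y : ℕ}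
    (hy : y ∈ carrySupport (multiplicity x) n) :
    ∃ k T, x k + T = y ∧ #(carrySupport (multiplicity x) n) + T ≤ Fintype.card ι + 1 := by
  obtain ⟨hyn, hy⟩ := mem_filter.1 hy
  obtain ⟨x₀, T, rfl, hx₀, hT⟩ := exists_carry_origin (k := 0) hy
  rw [zero_add] at hT
  obtain ⟨k, hk⟩ := card_pos.1 hx₀
  have hx₀n : x₀ < n := (Nat.le_add_right x₀ T).trans_lt (mem_range.1 hyn)
  have hcard := card_carrySupport_add_carry_add_le hT hx₀n
  rw [sum_range_multiplicity hx] at hcard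
  exact ⟨k, T, by rw [(mem_filter.1 hk).2], by lia⟩

theorem exists_card_range_sdiff_eq (E : Finset ℕ) (q : ℕ) : ∃ J, #(range J \ E) = q := by
  obtain ⟨J, hJ⟩ := Nat.surjective_count_of_infinite_setOfPred (p := (· ∉ E))
    E.finite_toSet.infinite_compl q
  exact ⟨J, by rw [sdiff_eq_filter, ← Nat.count_eq_card_filter_range, hJ]⟩

theorem exists_closed_signedSums_superset (hx : ∀ k, (x k : ℤ) ∈ familySignedSums x) :
    ∃ E : Finset ℕ, #E ≤ Fintype.card ι + 1 ∧ (∀ y ∈ E, (y : ℤ) ∈ signedSums E) ∧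
      familySignedSums x ⊆ signedSums E := by
  obtain ⟨L, hL⟩ : ∃ L, ∀ k, x k < L :=
    ⟨univ.sup x + 1, fun k => Nat.lt_succ_of_le (le_sup (mem_univ k))⟩
  obtain ⟨n, hLn, hn⟩ := exists_carry_eq_zero (c := multiplicity x) (L := L) fun i hi =>
    card_eq_zero.2 (filter_eq_empty_iff.2 fun k _ hk => by have := hL k; lia)
  have hxn : ∀ k, x k < n := fun k => (hL k).trans_le hLn
  set E := carrySupport (multiplicity x) n
  have hsub : familySignedSums x ⊆ signedSums E :=
    familySignedSums_subset_signedSums_carrySupport hxn hn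
  obtain ⟨J, hJ⟩ := exists_card_range_sdiff_eq E (Fintype.card ι + 1 - #E)
  refine ⟨E ∪ range J, ?_, fun y hy => ?_, hsub.trans (signedSums_mono subset_union_left)⟩
  · have := card_carrySupport_add_carry_le (c := multiplicity x) n
    rw [sum_range_multiplicity hxn] at this
    rw [← union_sdiff_self_eq_union, card_union_of_disjoint disjoint_sdiff]
    lia
  · rcases mem_union.1 hy with hyE | hyJ
    · obtain ⟨k, T, rfl, hT⟩ := exists_add_eq_of_mem_carrySupport hxn hyE
      push_cast
      exact add_natCast_mem_signedSums_union_range (hsub (hx k)) (by lia)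
    · have hyJ : |(y : ℤ)| < 2 ^ J := by
        rw [Nat.abs_cast]
        exact_mod_cast (mem_range.1 hyJ).trans Nat.lt_two_pow_self
      exact signedSums_mono subset_union_right (mem_signedSums_range hyJ)

end Family

/-! ### Circuits from closed sets of exponents -/

/-- The nonzero vertices of a proper reduced circuit, described by integer data: vertex `i` has
evaluation `2 ^ exp i`, its edges to the other nonzero vertices are labelled by `digit i`, and
`root` gives the signs of the marked vertices, with `0` for unmarked ones. The edges into the zero
vertex are determined by `exp`. -/
structure ReducedScheme (k : ℕ) where
  exp : Fin k → ℕ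
  exp_injective : Function.Injective exp
  digit : Fin k → Fin k → ℤ
  abs_digit_le : ∀ i j, |digit i j| ≤ 1
  sum_digit : ∀ i, ∑ j, digit i j * 2 ^ exp j = exp i
  exp_lt : ∀ {i j}, digit i j ≠ 0 → exp j < exp i
  digit_ne_neg : ∀ {i j j'}, digit i j' ≠ 0 → exp j = exp j' + 1 → digit i j ≠ -digit i j'
  root : Fin k → ℤ
  abs_root_le : ∀ i, |root i| ≤ 1
  reachable : ∀ i, ∃ m, root m ≠ 0 ∧ Relation.ReflTransGen (fun a b => digit a b ≠ 0) m i

namespace ReducedScheme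

variable {k : ℕ} (S : ReducedScheme k)

/-- The edge labels of the circuit of `S`: vertex `0` is the zero vertex, vertex `i + 1` is the
vertex `i` of `S`, and only the vertex of exponent `0` has an edge into the zero vertex. -/
def lab : Fin (k + 1) → Fin (k + 1) → ℤ :=
  Fin.cons 0 fun i => Fin.cons (if S.exp i = 0 then 1 else 0) (S.digit i)

/-- The signs of the vertices of the circuit of `S`, with `0` for unmarked vertices. -/
def sign : Fin (k + 1) → ℤ :=
  Fin.cons 0 S.root

/-- The evaluation of the circuit of `S`. -/
noncomputable def vertexEval : Fin (k + 1) → ℝ :=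
  Fin.cons 0 fun i => 2 ^ S.exp i

@[simp] theorem lab_zero (w : Fin (k + 1)) : S.lab 0 w = 0 := rfl

@[simp] theorem lab_succ_zero (i : Fin k) : S.lab i.succ 0 = if S.exp i = 0 then 1 else 0 := rfl

@[simp] theorem lab_succ_succ (i j : Fin k) : S.lab i.succ j.succ = S.digit i j := rfl

@[simp] theorem sign_zero : S.sign 0 = 0 := rfl

@[simp] theorem sign_succ (i : Fin k) : S.sign i.succ = S.root i := rfl

@[simp] theorem vertexEval_zero : S.vertexEval 0 = 0 := rfl

@[simp] theorem vertexEval_succ (i : Fin k) : S.vertexEval i.succ = 2 ^ S.exp i := rfl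

theorem exists_digit_ne_zero {i : Fin k} (hi : S.exp i ≠ 0) : ∃ j, S.digit i j ≠ 0 := by
  by_contra! h
  have := S.sum_digit i
  simp only [h, zero_mul, sum_const_zero] at this
  exact hi (by exact_mod_cast this.symm)

theorem digit_eq_zero_of_exp_eq_zero {i : Fin k} (hi : S.exp i = 0) (j : Fin k) :
    S.digit i j = 0 := by
  by_contra h
  exact (Nat.zero_le _).not_gt (hi ▸ S.exp_lt h)

theorem exists_exp_eq_zero [NeZero k] : ∃ i, S.exp i = 0 := by
  obtain ⟨i, hi⟩ := Finite.exists_min S.exp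
  by_contra! h
  obtain ⟨j, hj⟩ := S.exists_digit_ne_zero (h i)
  exact (S.exp_lt hj).not_ge (hi j)

theorem forall_lab_eq_zero_iff {v : Fin (k + 1)} : (∀ w, S.lab v w = 0) ↔ v = 0 := by
  cases v using Fin.cases with
  | zero => simp
  | succ i =>
    refine iff_of_false (fun h => ?_) (Fin.succ_ne_zero i)
    have hi : S.exp i ≠ 0 := by simpa using h 0
    obtain ⟨j, hj⟩ := S.exists_digit_ne_zero hi
    exact hj (h j.succ)

theorem abs_lab_le (u v : Fin (k + 1)) : |S.lab u v| ≤ 1 := by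
  cases u using Fin.cases with
  | zero => simp
  | succ i =>
    cases v using Fin.cases with
    | zero => rw [lab_succ_zero]; split_ifs <;> simp
    | succ j => exact S.abs_digit_le i j

theorem vertexEval_injective : Function.Injective S.vertexEval := by
  refine Fin.cons_injective_iff.2 ⟨?_, fun i j h => S.exp_injective ?_⟩
  · rintro ⟨i, hi⟩
    exact pow_ne_zero _ two_ne_zero hi
  · exact pow_right_injective₀ two_pos (by norm_num) h

theorem vertexEval_lt_of_lab_ne_zero {u v : Fin (k + 1)} (h : S.lab u v ≠ 0) :
    S.vertexEval v < S.vertexEval u := by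
  cases u using Fin.cases with
  | zero => exact absurd (S.lab_zero v) h
  | succ i =>
    cases v using Fin.cases with
    | zero => simp
    | succ j => simpa using pow_lt_pow_right₀ one_lt_two (S.exp_lt h)

theorem sum_lab_succ_mul_vertexEval (i : Fin k) :
    ∑ w, (S.lab i.succ w : ℝ) * S.vertexEval w = S.exp i := by
  simp only [Fin.sum_univ_succ, vertexEval_zero, mul_zero, zero_add, lab_succ_succ,
    vertexEval_succ]
  exact_mod_cast S.sum_digit i

variable [NeZero k]

theorem exists_root_ne_zero : ∃ i, S.root i ≠ 0 :=
  let ⟨m, hm, _⟩ := S.reachable 0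
  ⟨m, hm⟩

/-- The circuit described by `S`: its nonzero vertices together with one zero vertex. -/
noncomputable def toCircuit : PowerCircuit where
  n := k + 1
  npos := k.succ_pos
  lab := S.lab
  labValid u v := Int.abs_le_one_iff.1 (S.abs_lab_le u v)
  acyclic := by
    have : WellFounded fun u v => S.vertexEval u < S.vertexEval v :=
      Finite.wellFounded_of_trans_of_irrefl _
    exact Subrelation.wf S.vertexEval_lt_of_lab_ne_zero this
  M := {v : Fin (k + 1) | S.sign v ≠ 0}
  Mne :=
    let ⟨m, hm⟩ := S.exists_root_ne_zero
    ⟨m.succ, by simpa using hm⟩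
  nu := S.sign
  nuValid v hv := by
    cases v using Fin.cases with
    | zero => simp at hv
    | succ i => exact (Int.abs_le_one_iff.1 (S.abs_root_le i)).resolve_left (by simpa using hv)
  eval := S.vertexEval
  evalSpec v := by
    rw [if_congr S.forall_lab_eq_zero_iff rfl rfl]
    cases v using Fin.cases with
    | zero => simp
    | succ i => simp [S.sum_lab_succ_mul_vertexEval i]

theorem mem_toCircuit_M {v : Fin (k + 1)} : v ∈ S.toCircuit.M ↔ S.sign v ≠ 0 :=
  show v ∈ ({w | S.sign w ≠ 0} : Finset (Fin (k + 1))) ↔ _ from mem_filter_univ v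

theorem toCircuit_proper : S.toCircuit.Proper := by
  refine Fin.cases ⟨0, by simp [toCircuit]⟩ fun i => ⟨2 ^ S.exp i, by simp [toCircuit]⟩

theorem toCircuit_value : S.toCircuit.value = ((∑ i, S.root i * 2 ^ S.exp i : ℤ) : ℝ) := by
  have hM : S.toCircuit.value = ∑ v, (S.sign v : ℝ) * S.vertexEval v := by
    refine sum_subset (subset_univ _) fun v _ hv => ?_
    have hv : S.sign v = 0 := not_not.1 fun h => hv (S.mem_toCircuit_M.2 h)
    simp [toCircuit, hv]
  rw [hM, Fin.sum_univ_succ]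
  simp

theorem toCircuit_trimmed : S.toCircuit.Trimmed := by
  have hsucc : ∀ i : Fin k, ∃ m ∈ S.toCircuit.M,
      Relation.ReflTransGen (fun a b => S.toCircuit.lab a b ≠ 0) m i.succ := fun i => by
    obtain ⟨m, hm, hpath⟩ := S.reachable i
    exact ⟨m.succ, S.mem_toCircuit_M.2 hm, hpath.lift Fin.succ fun _ _ h => h⟩
  refine Fin.cases ?_ hsucc
  obtain ⟨i, hi⟩ := S.exists_exp_eq_zero
  obtain ⟨m, hm, hpath⟩ := hsucc i
  exact ⟨m, hm, hpath.tail (show S.lab i.succ 0 ≠ 0 by simp [hi])⟩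

theorem toCircuit_standardForm : S.toCircuit.StandardForm := by
  refine ⟨S.toCircuit_trimmed, ⟨(0 : Fin (k + 1)), S.forall_lab_eq_zero_iff.2 rfl, fun v hv =>
    S.forall_lab_eq_zero_iff.1 hv⟩, Or.inr fun z hz hM => ?_, fun v z hz hvz w hvw => ?_⟩
  · obtain rfl := S.forall_lab_eq_zero_iff.1 hz
    exact S.mem_toCircuit_M.1 hM S.sign_zero
  · obtain rfl := S.forall_lab_eq_zero_iff.1 hz
    cases v using Fin.cases with
    | zero => exact absurd (S.lab_zero 0) hvz
    | succ i =>
      have hi : S.exp i = 0 := by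
        by_contra h
        exact hvz (if_neg h)
      cases w using Fin.cases with
      | zero => rfl
      | succ j => exact absurd (S.digit_eq_zero_of_exp_eq_zero hi j) hvw

theorem toCircuit_noSuperfluousPairs : S.toCircuit.NoSuperfluousPairs := by
  intro v v₁ v₂ hne h₁ h₂ hopp heval
  cases v using Fin.cases with
  | zero => exact h₁ (S.lab_zero v₁)
  | succ i =>
  cases v₂ using Fin.cases with
  | zero =>
    exact hne (S.vertexEval_injective (heval.trans (mul_zero 2)))
  | succ j₂ =>
  cases v₁ using Fin.cases with
  | zero => simp [toCircuit] at heval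
  | succ j₁ =>
    have hexp : S.exp j₁ = S.exp j₂ + 1 := by
      refine pow_right_injective₀ (two_pos : (0 : ℝ) < 2) (by norm_num) (heval.trans ?_)
      exact (pow_succ' _ _).symm
    exact S.digit_ne_neg h₂ hexp hopp

theorem toCircuit_reduced : S.toCircuit.Reduced :=
  ⟨S.toCircuit_standardForm, fun _ _ h => S.vertexEval_injective h,
    fun _ _ _ hne _ _ _ h => hne (S.vertexEval_injective h), S.toCircuit_noSuperfluousPairs⟩

end ReducedScheme

theorem exists_descendants_subset {δ : ℕ → ℕ →₀ ℤ} (hδ : ∀ x ∈ E, (δ x).support ⊆ E)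
    {ρ : ℕ →₀ ℤ} (hρ : ρ.support ⊆ E) :
    ∃ F ⊆ E, ρ.support ⊆ F ∧ (∀ x ∈ F, (δ x).support ⊆ F) ∧
      ∀ x ∈ F, ∃ r ∈ ρ.support, Relation.ReflTransGen (fun a b => δ a b ≠ 0) r x := by
  classical
  refine ⟨{x ∈ E | ∃ r ∈ ρ.support, Relation.ReflTransGen (fun a b => δ a b ≠ 0) r x},
    filter_subset _ _, fun x hx => mem_filter.2 ⟨hρ hx, x, hx, .refl⟩, fun x hx y hy => ?_,
    fun x hx => (mem_filter.1 hx).2⟩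
  obtain ⟨hxE, r, hr, hpath⟩ := mem_filter.1 hx
  exact mem_filter.2 ⟨hδ x hxE hy, r, hr, hpath.tail (Finsupp.mem_support_iff.1 hy)⟩

theorem exists_reducedScheme (hE : ∀ y ∈ E, (y : ℤ) ∈ signedSums E) (hN : N ∈ signedSums E) :
    ∃ k ≤ #E, ∃ S : ReducedScheme k, ∑ i, S.root i * 2 ^ S.exp i = N := by
  choose! δ hδE hcompact hδ using fun y hy => exists_isCompactExpansion (hE y hy)
  obtain ⟨ρ, hρE, rfl⟩ := hN
  obtain ⟨F, hFE, hρF, hδF, hreach⟩ :=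
    exists_descendants_subset (fun x hx => (hδE x hx).2) hρE.2
  let e : Fin #F ≃ F := F.equivFin.symm
  have he : ∀ i, (e i : ℕ) ∈ E := fun i => hFE (e i).2
  have hsum : ∀ η : ℕ →₀ ℤ, η.support ⊆ F → ∑ j, η (e j) * 2 ^ (e j : ℕ) = binaryValue η :=
    fun η hη => by
      rw [binaryValue_eq_sum hη, ← sum_coe_sort F, ← e.sum_comp]
  have hpath : ∀ m y, Relation.ReflTransGen (fun a b => δ a b ≠ 0) (e m) y →
      ∃ j, (e j : ℕ) = y ∧ Relation.ReflTransGen (fun a b => δ (e a) (e b) ≠ 0) m j := by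
    intro m y h
    induction h with
    | refl => exact ⟨m, rfl, .refl⟩
    | tail _ hstep ih =>
      obtain ⟨j, rfl, hj⟩ := ih
      obtain ⟨l, hl⟩ := e.surjective ⟨_, hδF _ (e j).2 (Finsupp.mem_support_iff.2 hstep)⟩
      exact ⟨l, by rw [hl], hj.tail (by rwa [hl])⟩
  refine ⟨#F, card_le_card hFE, {
    exp i := e i
    exp_injective := Subtype.val_injective.comp e.injective
    digit i j := δ (e i) (e j)
    abs_digit_le i j := (hδE _ (he i)).1 _
    sum_digit i := by rw [hsum _ (hδF _ (e i).2), hδ _ (he i)]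
    exp_lt {i j} h := (hcompact _ (he i)).lt_of_ne_zero (hδE _ (he i)).1 (hδ _ (he i)) h
    digit_ne_neg {i j j'} h hj := hj ▸ hcompact _ (he i) _ h
    root i := ρ (e i)
    abs_root_le i := hρE.1 _
    reachable i := ?_ }, hsum ρ hρF⟩
  obtain ⟨r, hr, hri⟩ := hreach _ (e i).2
  obtain ⟨m, hm⟩ := e.surjective ⟨r, hρF hr⟩
  obtain ⟨j, hj, hmj⟩ := hpath m (e i) (by rwa [hm])
  obtain rfl : j = i := e.injective (Subtype.ext hj)
  exact ⟨m, by simpa [hm] using hr, hmj⟩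

theorem exists_reduced_circuit_of_closed (hE : ∀ y ∈ E, (y : ℤ) ∈ signedSums E)
    (hN : N ∈ signedSums E) (hN0 : N ≠ 0) :
    ∃ P : PowerCircuit, P.Reduced ∧ P.Proper ∧ P.value = N ∧ P.n ≤ #E + 1 := by
  obtain ⟨k, hk, S, rfl⟩ := exists_reducedScheme hE hN
  have : NeZero k := ⟨by rintro rfl; exact hN0 sum_empty⟩
  exact ⟨S.toCircuit, S.toCircuit_reduced, S.toCircuit_proper, S.toCircuit_value,
    Nat.succ_le_succ hk⟩

/-- The trivial circuit: a single zero vertex, marked with sign `1`. -/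
def trivialCircuit : PowerCircuit where
  n := 1
  npos := one_pos
  lab := 0
  labValid _ _ := Or.inl rfl
  acyclic := ⟨fun _ => ⟨_, fun _ h => absurd rfl h⟩⟩
  M := {0}
  Mne := singleton_nonempty 0
  nu := 1
  nuValid _ _ := Or.inl rfl
  eval := 0
  evalSpec _ := (if_pos fun _ => rfl).symm

theorem trivialCircuit_proper : trivialCircuit.Proper :=
  fun _ => ⟨0, Nat.cast_zero.symm⟩

theorem trivialCircuit_value : trivialCircuit.value = 0 :=
  sum_eq_zero fun _ _ => mul_zero _

theorem trivialCircuit_reduced : trivialCircuit.Reduced := by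
  have : Subsingleton (Fin trivialCircuit.n) := inferInstanceAs (Subsingleton (Fin 1))
  refine ⟨⟨fun v => ⟨(0 : Fin 1), mem_singleton_self _, ?_⟩, ⟨(0 : Fin 1), fun _ => rfl,
    fun _ _ => Subsingleton.elim _ _⟩, Or.inl rfl, fun _ _ _ h => absurd rfl h⟩,
    fun _ _ _ => Subsingleton.elim _ _, fun _ _ _ hne => absurd (Subsingleton.elim _ _) hne,
    fun _ _ _ hne => absurd (Subsingleton.elim _ _) hne⟩
  rw [Subsingleton.elim v (0 : Fin 1)]
  exact .refl

/-! ### Exponents of a proper circuit -/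

section ProperCircuit

variable {P : PowerCircuit}

/-- The vertices of `P` with an outgoing edge, which are those of nonzero evaluation. -/
abbrev NonzeroVertex (P : PowerCircuit) : Type :=
  {v : Fin P.n // ¬ P.IsZeroVertex v}

theorem exists_isZeroVertex (P : PowerCircuit) : ∃ v, P.IsZeroVertex v := by
  obtain ⟨v, -, hv⟩ := P.acyclic.has_min Set.univ ⟨⟨0, P.npos⟩, trivial⟩
  exact ⟨v, fun w => not_not.1 (hv w trivial)⟩

open scoped Classical in
theorem card_nonzeroVertex_lt (P : PowerCircuit) : Fintype.card P.NonzeroVertex < P.n := by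
  obtain ⟨z, hz⟩ := P.exists_isZeroVertex
  simpa using Fintype.card_subtype_lt (p := fun v => ¬ P.IsZeroVertex v) (not_not.2 hz)

theorem IsZeroVertex.eval_eq_zero {v : Fin P.n} (hv : P.IsZeroVertex v) : P.eval v = 0 := by
  rw [P.evalSpec]
  exact if_pos hv

theorem eval_of_not_isZeroVertex {v : Fin P.n} (hv : ¬ P.IsZeroVertex v) :
    P.eval v = 2 ^ ∑ w, (P.lab v w : ℝ) * P.eval w := by
  rw [P.evalSpec]
  exact if_neg hv

open scoped Classical in
theorem sum_mul_eval_eq_sum_nonzeroVertex (g : Fin P.n → ℝ) :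
    ∑ v, g v * P.eval v = ∑ v : P.NonzeroVertex, g v * P.eval v := by
  rw [← Fintype.sum_subtype_add_sum_subtype P.IsZeroVertex, add_eq_right]
  exact sum_eq_zero fun v _ => by rw [v.2.eval_eq_zero, mul_zero]

theorem Proper.exists_eval_eq_two_pow (hP : P.Proper) {v : Fin P.n} (hv : ¬ P.IsZeroVertex v) :
    ∃ x : ℕ, ∑ w, (P.lab v w : ℝ) * P.eval w = x ∧ P.eval v = 2 ^ x := by
  choose a ha using hP
  have hint : ∑ w, (P.lab v w : ℝ) * P.eval w = ((∑ w, P.lab v w * a w : ℤ) : ℝ) := by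
    push_cast
    simp only [ha]
  have heval := eval_of_not_isZeroVertex hv
  have hone : 1 ≤ P.eval v := by
    have hpos : 0 < P.eval v := heval ▸ Real.rpow_pos_of_pos two_pos _
    rw [ha] at hpos ⊢
    exact_mod_cast hpos
  have hnonneg : 0 ≤ ∑ w, (P.lab v w : ℝ) * P.eval w := by
    rw [heval] at hone
    by_contra! hneg
    exact hone.not_gt (Real.rpow_lt_one_of_one_lt_of_neg one_lt_two hneg)
  rw [hint, Int.cast_nonneg_iff] at hnonneg
  obtain ⟨x, hx⟩ := Int.eq_ofNat_of_zero_le hnonneg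
  have hsum : ∑ w, (P.lab v w : ℝ) * P.eval w = x := by rw [hint, hx, Int.cast_natCast]
  exact ⟨x, hsum, by rw [heval, hsum, Real.rpow_natCast]⟩

open scoped Classical in
theorem Proper.exists_exponents (hP : P.Proper) : ∃ x : P.NonzeroVertex → ℕ,
    (∀ v : P.NonzeroVertex, P.eval v = 2 ^ x v) ∧ ∀ v, (x v : ℤ) ∈ familySignedSums x := by
  choose x hsum hx using fun v : P.NonzeroVertex => hP.exists_eval_eq_two_pow v.2
  refine ⟨x, hx, fun v => ⟨fun w => P.lab v w, fun w => Int.abs_le_one_iff.2 (P.labValid v w), ?_⟩⟩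
  have := hsum v
  simp only [sum_mul_eval_eq_sum_nonzeroVertex, hx] at this
  exact_mod_cast this

open scoped Classical in
theorem exists_mem_familySignedSums_value_eq {x : P.NonzeroVertex → ℕ}
    (hx : ∀ v : P.NonzeroVertex, P.eval v = 2 ^ x v) :
    ∃ N ∈ familySignedSums x, P.value = N := by
  let ε : Fin P.n → ℤ := fun v => if v ∈ P.M then P.nu v else 0
  have hε : ∀ v, |ε v| ≤ 1 := fun v => by
    by_cases hv : v ∈ P.M
    · exact Int.abs_le_one_iff.2 (Or.inr (by simpa [ε, hv] using P.nuValid v hv))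
    · simp [ε, hv]
  refine ⟨_, ⟨fun v => ε v, fun v => hε v, rfl⟩, ?_⟩
  calc P.value = ∑ v, (ε v : ℝ) * P.eval v := by simp [value, ε, ite_mul]
    _ = ∑ v : P.NonzeroVertex, (ε v : ℝ) * P.eval v := sum_mul_eval_eq_sum_nonzeroVertex _
    _ = _ := by simp [hx]

end ProperCircuit

end PowerCircuit

/-- For every proper constant power circuit `P` there is an equivalent proper
reduced constant power circuit `P'` with at most one more vertex. -/
theorem exists_equivalent_reduced_circuit (P : PowerCircuit) (hP : P.Proper) :
    ∃ P' : PowerCircuit, P'.Reduced ∧ P'.Proper ∧ P'.value = P.value ∧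
      P'.n ≤ P.n + 1 := by
  classical
  obtain ⟨x, hx, hclosed⟩ := hP.exists_exponents
  obtain ⟨N, hN, hvalue⟩ := PowerCircuit.exists_mem_familySignedSums_value_eq hx
  obtain ⟨E, hcard, hE, hsub⟩ := PowerCircuit.exists_closed_signedSums_superset hclosed
  rw [hvalue]
  rcases eq_or_ne N 0 with rfl | hN0
  · exact ⟨.trivialCircuit, PowerCircuit.trivialCircuit_reduced,
      PowerCircuit.trivialCircuit_proper, by simp [PowerCircuit.trivialCircuit_value],
      Nat.le_add_left 1 P.n⟩
  · obtain ⟨P', hred, hprop, hval, hn⟩ :=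
      PowerCircuit.exists_reduced_circuit_of_closed hE (hsub hN) hN0
    have := P.card_nonzeroVertex_lt
    exact ⟨P', hred, hprop, hval, by lia⟩
end

section
/- For every natural number n ≥ 1 there exists a constant power circuit in normal form that properly represents n and has at most ⌈log₂ n⌉ + 2 vertices. -/
/-!
Every integer is a signed sum of powers of two in which no two consecutive powers occur, its
non-adjacent form. Take the vertices `0, 1, 2, 4, 8, …`, let `2 ^ i` point to the summands of the
non-adjacent form of its exponent `i`, and mark the summands of `N`. Since `i < 2 ^ i`, edges
decrease the value, so the part reachable from the marks is finite and acyclic, and non-adjacency is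
exactly the gap of `2` between logarithms that normal form asks for. If `|N| ≤ 2 ^ m`, only
`0, 1, 2, …, 2 ^ m` can be reached, which are `m + 2` vertices.
-/

/-- The least significant digit of the non-adjacent form of `n`. For odd `n` it is the residue of
`n` modulo `4` in `{-1, 1}`, which makes the next digit zero. -/
def nafLowDigit (n : ℤ) : ℤ := if n % 2 = 0 then 0 else 2 - n % 4

/-- The integer whose non-adjacent form is that of `n` with the least significant digit removed. -/
def nafTail (n : ℤ) : ℤ := (n - nafLowDigit n) / 2

/-- The coefficient of `2 ^ i` in the non-adjacent form of `n`. -/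
def nafDigit (n : ℤ) (i : ℕ) : ℤ := nafLowDigit (nafTail^[i] n)

section NonAdjacentForm

variable {n : ℤ} {i m : ℕ}

theorem nafLowDigit_add_two_mul_nafTail (n : ℤ) : nafLowDigit n + 2 * nafTail n = n := by
  grind [nafTail, nafLowDigit]

theorem natAbs_nafTail_le (h : n.natAbs ≤ 2 * m) : (nafTail n).natAbs ≤ m := by
  grind [nafTail, nafLowDigit]

theorem nafTail_eq_zero_of_natAbs_le_one (h : n.natAbs ≤ 1) : nafTail n = 0 := by
  grind [nafTail, nafLowDigit]

theorem nafLowDigit_nafTail_eq_zero (h : nafLowDigit n ≠ 0) : nafLowDigit (nafTail n) = 0 := by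
  grind [nafTail, nafLowDigit]

theorem iterate_nafTail_zero (i : ℕ) : nafTail^[i] 0 = 0 :=
  Function.iterate_fixed rfl i

theorem iterate_nafTail_eq_zero (h : n.natAbs ≤ 2 ^ m) (hi : m < i) : nafTail^[i] n = 0 := by
  obtain ⟨i, rfl⟩ := Nat.exists_eq_succ_of_ne_zero (Nat.ne_zero_of_lt hi)
  rw [Function.iterate_succ_apply]
  induction m generalizing n i with
  | zero => rw [nafTail_eq_zero_of_natAbs_le_one (by simpa using h), iterate_nafTail_zero]
  | succ m ih =>
    obtain ⟨i, rfl⟩ := Nat.exists_eq_succ_of_ne_zero (n := i) (by lia)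
    exact ih (natAbs_nafTail_le (by rwa [← pow_succ'])) i (by lia)

theorem nafDigit_zero_left (i : ℕ) : nafDigit 0 i = 0 := by
  rw [nafDigit, iterate_nafTail_zero]; rfl

theorem nafDigit_eq_zero_or (n : ℤ) (i : ℕ) :
    nafDigit n i = 0 ∨ nafDigit n i = 1 ∨ nafDigit n i = -1 := by
  grind [nafDigit, nafLowDigit]

theorem nafDigit_succ_eq_zero (h : nafDigit n i ≠ 0) : nafDigit n (i + 1) = 0 := by
  rw [nafDigit, Function.iterate_succ_apply']
  exact nafLowDigit_nafTail_eq_zero h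

theorem nafDigit_eq_zero_of_lt (h : n.natAbs ≤ 2 ^ m) (hi : m < i) : nafDigit n i = 0 := by
  rw [nafDigit, iterate_nafTail_eq_zero h hi]; rfl

theorem sum_nafDigit_add_iterate_nafTail (n : ℤ) (m : ℕ) :
    ∑ i ∈ Finset.range m, nafDigit n i * 2 ^ i + 2 ^ m * nafTail^[m] n = n := by
  induction m with
  | zero => simp
  | succ m ih =>
    rw [Finset.sum_range_succ, Function.iterate_succ_apply', nafDigit]
    linear_combination ih + 2 ^ m * nafLowDigit_add_two_mul_nafTail (nafTail^[m] n)

theorem sum_nafDigit (h : n.natAbs ≤ 2 ^ m) :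
    ∑ i ∈ Finset.range (m + 1), nafDigit n i * 2 ^ i = n := by
  simpa [iterate_nafTail_eq_zero h m.lt_succ_self] using
    sum_nafDigit_add_iterate_nafTail n (m + 1)

end NonAdjacentForm

namespace PowerCircuit

/-- The evaluation of the vertices of the infinite circuit on `ℕ`: vertex `0` is the zero vertex
and vertex `i + 1` stands for `2 ^ i`. -/
def vertexValue : ℕ → ℕ
  | 0 => 0
  | i + 1 => 2 ^ i

/-- The coefficient of vertex `b` in the representation of `k` as a signed sum of vertices given by
its non-adjacent form. The zero vertex represents `k = 0`, so that this sum is never empty. -/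
def vertexCoeff (k : ℤ) : ℕ → ℤ
  | 0 => if k = 0 then 1 else 0
  | j + 1 => nafDigit k j

/-- The edge labels of the infinite circuit, `0` standing for the absence of an edge: the vertex
`2 ^ i` points to the summands of its exponent `i`. -/
def edgeLabel : ℕ → ℕ → ℤ
  | 0, _ => 0
  | i + 1, b => vertexCoeff i b

/-- Two vertices of the infinite circuit are separated if both are non-zero and their exponents
differ by at least `2`. -/
def Separated (b c : ℕ) : Prop := 0 < b ∧ 0 < c ∧ (b + 2 ≤ c ∨ c + 2 ≤ b)

section InfiniteCircuit

variable {k : ℤ} {a b c m : ℕ}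

theorem vertexValue_injective : Function.Injective vertexValue := by
  rintro (_ | a) (_ | b) h
  · rfl
  · exact absurd h (Nat.two_pow_pos b).ne
  · exact absurd h (Nat.two_pow_pos a).ne'
  · exact congrArg Nat.succ (Nat.pow_right_injective le_rfl h)

theorem vertexValue_succ (hb : 0 < b) : vertexValue (b + 1) = 2 * vertexValue b := by
  obtain ⟨b, rfl⟩ := Nat.exists_eq_succ_of_ne_zero hb.ne'
  exact pow_succ' 2 b

theorem logb_vertexValue (hb : 0 < b) : Real.logb 2 (vertexValue b) = b - 1 := by
  obtain ⟨b, rfl⟩ := Nat.exists_eq_succ_of_ne_zero hb.ne'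
  simp [vertexValue, Real.logb_pow]

theorem vertexCoeff_eq_zero_or (k : ℤ) (b : ℕ) :
    vertexCoeff k b = 0 ∨ vertexCoeff k b = 1 ∨ vertexCoeff k b = -1 := by
  cases b with
  | zero => grind [vertexCoeff]
  | succ j => exact nafDigit_eq_zero_or k j

theorem vertexCoeff_zero_left_ne_zero_iff : vertexCoeff 0 b ≠ 0 ↔ b = 0 := by
  cases b <;> simp [vertexCoeff, nafDigit_zero_left]

theorem vertexCoeff_zero_right (hk : k ≠ 0) : vertexCoeff k 0 = 0 :=
  if_neg hk

theorem le_of_vertexCoeff_ne_zero (hk : k.natAbs ≤ 2 ^ m) (hb : vertexCoeff k b ≠ 0) :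
    b ≤ m + 1 := by
  by_contra! hlt
  obtain ⟨j, rfl⟩ := Nat.exists_eq_succ_of_ne_zero (n := b) (by lia)
  exact hb (nafDigit_eq_zero_of_lt hk (by lia))

theorem separated_of_vertexCoeff_ne_zero (hb : vertexCoeff k b ≠ 0) (hc : vertexCoeff k c ≠ 0)
    (hbc : b ≠ c) : Separated b c := by
  rcases eq_or_ne k 0 with rfl | hk
  · rw [vertexCoeff_zero_left_ne_zero_iff] at hb hc
    exact absurd (hb.trans hc.symm) hbc
  · match b, c with
    | 0, _ => exact absurd (vertexCoeff_zero_right hk) hb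
    | _ + 1, 0 => exact absurd (vertexCoeff_zero_right hk) hc
    | i + 1, j + 1 =>
      have hj : j ≠ i + 1 := by rintro rfl; exact hc (nafDigit_succ_eq_zero hb)
      have hi : i ≠ j + 1 := by rintro rfl; exact hb (nafDigit_succ_eq_zero hc)
      rw [Separated]
      lia

theorem hasSum_vertexCoeff_mul_vertexValue (k : ℤ) :
    HasSum (fun b ↦ (vertexCoeff k b : ℝ) * vertexValue b) k := by
  have hk : k.natAbs ≤ 2 ^ k.natAbs := Nat.lt_two_pow_self.le
  have hsum : ∑ b ∈ Finset.range (k.natAbs + 2), (vertexCoeff k b : ℝ) * vertexValue b = k := by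
    rw [Finset.sum_range_succ']
    simpa [vertexCoeff, vertexValue] using congrArg (Int.cast : ℤ → ℝ) (sum_nafDigit hk)
  refine hsum ▸ hasSum_sum_of_ne_finset_zero fun b hb ↦ ?_
  have hcoeff : vertexCoeff k b = 0 := by
    by_contra hne
    exact hb (Finset.mem_range_succ_iff.2 (le_of_vertexCoeff_ne_zero hk hne))
  simp [hcoeff]

theorem exists_vertexCoeff_ne_zero (k : ℤ) : ∃ b, vertexCoeff k b ≠ 0 := by
  by_contra! hzero
  have hk : k = 0 := by simpa [hzero] using (hasSum_vertexCoeff_mul_vertexValue k).tsum_eq.symm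
  exact vertexCoeff_zero_left_ne_zero_iff.2 rfl (hk ▸ hzero 0)

theorem sum_vertexCoeff_mul_vertexValue {ι : Type*} [Fintype ι] {f : ι → ℕ}
    (hf : Function.Injective f) (hk : ∀ b, vertexCoeff k b ≠ 0 → b ∈ Set.range f) :
    ∑ i, (vertexCoeff k (f i) : ℝ) * vertexValue (f i) = k := by
  have hsupp : ∀ b ∉ Set.range f, (vertexCoeff k b : ℝ) * vertexValue b = 0 := by
    intro b hb
    have hcoeff : vertexCoeff k b = 0 := not_not.1 (mt (hk b) hb)
    simp [hcoeff]
  exact (hasSum_fintype _).unique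
    ((hf.hasSum_iff hsupp).2 (hasSum_vertexCoeff_mul_vertexValue k))

theorem edgeLabel_eq_zero_or (a b : ℕ) :
    edgeLabel a b = 0 ∨ edgeLabel a b = 1 ∨ edgeLabel a b = -1 := by
  cases a with
  | zero => exact Or.inl rfl
  | succ i => exact vertexCoeff_eq_zero_or i b

theorem separated_of_edgeLabel_ne_zero (hb : edgeLabel a b ≠ 0) (hc : edgeLabel a c ≠ 0)
    (hbc : b ≠ c) : Separated b c := by
  cases a with
  | zero => exact absurd rfl hb
  | succ i => exact separated_of_vertexCoeff_ne_zero hb hc hbc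

theorem lt_of_edgeLabel_ne_zero (h : edgeLabel a b ≠ 0) : b < a := by
  match a, h with
  | 1, h => exact Nat.lt_one_iff.2 (vertexCoeff_zero_left_ne_zero_iff.1 h)
  | i + 2, h =>
    have hi : (i + 1 : ℤ).natAbs ≤ 2 ^ i := Nat.lt_two_pow_self
    exact Nat.lt_succ_iff.2 (le_of_vertexCoeff_ne_zero hi h)

theorem Separated.vertexValue_ne_two_mul (h : Separated b c) :
    (vertexValue b : ℝ) ≠ 2 * vertexValue c := by
  obtain ⟨-, hc, hbc⟩ := h
  norm_cast
  rw [← vertexValue_succ hc, vertexValue_injective.eq_iff]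
  lia

theorem Separated.two_le_abs_logb_sub (h : Separated b c) :
    2 ≤ |Real.logb 2 (vertexValue b) - Real.logb 2 (vertexValue c)| := by
  obtain ⟨hb, hc, hbc⟩ := h
  rw [logb_vertexValue hb, logb_vertexValue hc, sub_sub_sub_cancel_right, le_abs]
  norm_cast
  lia

end InfiniteCircuit

/-- The vertices of the infinite circuit that can be reached when the summands of `N` are marked. -/
inductive Reachable (N : ℤ) : ℕ → Prop
  | mark {b : ℕ} (hb : vertexCoeff N b ≠ 0) : Reachable N b
  | edge {a b : ℕ} (ha : Reachable N a) (hab : edgeLabel a b ≠ 0) : Reachable N b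

namespace Reachable

variable {N : ℤ} {b m : ℕ}

theorem le_add_one (hN : N.natAbs ≤ 2 ^ m) (hb : Reachable N b) : b ≤ m + 1 := by
  induction hb with
  | mark hb => exact le_of_vertexCoeff_ne_zero hN hb
  | edge _ hab ih => exact (lt_of_edgeLabel_ne_zero hab).le.trans ih

theorem eq_zero (hb : Reachable 0 b) : b = 0 := by
  induction hb with
  | mark hb => exact vertexCoeff_zero_left_ne_zero_iff.1 hb
  | edge _ hab ih => exact absurd (lt_of_edgeLabel_ne_zero hab) (by lia)

theorem zero_of_reachable (hb : Reachable N b) : Reachable N 0 := by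
  induction b using Nat.strong_induction_on with
  | _ b ih =>
    cases b with
    | zero => exact hb
    | succ i =>
      obtain ⟨c, hc⟩ : ∃ c, edgeLabel (i + 1) c ≠ 0 := exists_vertexCoeff_ne_zero i
      exact ih c (lt_of_edgeLabel_ne_zero hc) (hb.edge hc)

theorem zero (N : ℤ) : Reachable N 0 := by
  obtain ⟨b, hb⟩ := exists_vertexCoeff_ne_zero N
  exact zero_of_reachable (mark hb)

theorem finite (N : ℤ) : {b | Reachable N b}.Finite :=
  (Set.finite_Iic _).subset fun _ hb ↦ le_add_one Nat.lt_two_pow_self.le hb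

theorem ncard_le (hN : N.natAbs ≤ 2 ^ m) : {b | Reachable N b}.ncard ≤ m + 2 := by
  have hsub : {b | Reachable N b} ⊆ Finset.range (m + 2) := fun b hb ↦ by
    simpa [Nat.lt_succ_iff] using le_add_one hN hb
  simpa using Set.ncard_le_ncard hsub

end Reachable

/-- The increasing enumeration of the reachable vertices, identifying them with the vertices of a
finite circuit. -/
noncomputable def vertexIndex (N : ℤ) (v : Fin {b | Reachable N b}.ncard) : ℕ :=
  (Reachable.finite N).toFinset.orderEmbOfFin (Set.ncard_eq_toFinset_card _ _).symm v

section VertexIndex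

variable {N : ℤ}

theorem vertexIndex_injective (N : ℤ) : Function.Injective (vertexIndex N) :=
  (Finset.orderEmbOfFin _ _).injective

theorem range_vertexIndex (N : ℤ) : Set.range (vertexIndex N) = {b | Reachable N b} :=
  (Finset.range_orderEmbOfFin _ _).trans (Reachable.finite N).coe_toFinset

theorem reachable_vertexIndex (v : Fin {b | Reachable N b}.ncard) :
    Reachable N (vertexIndex N v) :=
  (range_vertexIndex N).subset ⟨v, rfl⟩

theorem Reachable.exists_vertexIndex_eq {b : ℕ} (hb : Reachable N b) :
    ∃ v, vertexIndex N v = b :=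
  (range_vertexIndex N).superset hb

theorem forall_edgeLabel_vertexIndex_eq_zero_iff (v : Fin {b | Reachable N b}.ncard) :
    (∀ w, edgeLabel (vertexIndex N v) (vertexIndex N w) = 0) ↔ vertexIndex N v = 0 := by
  refine ⟨fun hzero ↦ ?_, fun hv w ↦ by rw [hv, edgeLabel]⟩
  by_contra hv
  obtain ⟨i, hi⟩ := Nat.exists_eq_succ_of_ne_zero hv
  obtain ⟨b, hb⟩ : ∃ b, edgeLabel (vertexIndex N v) b ≠ 0 := hi ▸ exists_vertexCoeff_ne_zero i
  obtain ⟨w, rfl⟩ := ((reachable_vertexIndex v).edge hb).exists_vertexIndex_eq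
  exact hb (hzero w)

theorem sum_edgeLabel_mul_vertexValue {v : Fin {b | Reachable N b}.ncard} {i : ℕ}
    (hi : vertexIndex N v = i + 1) :
    ∑ w, (edgeLabel (vertexIndex N v) (vertexIndex N w) : ℝ) * vertexValue (vertexIndex N w) =
      i := by
  simp only [hi, edgeLabel]
  refine mod_cast sum_vertexCoeff_mul_vertexValue (k := i) (vertexIndex_injective N) fun b hb ↦ ?_
  have hedge : edgeLabel (vertexIndex N v) b ≠ 0 := hi ▸ hb
  exact ((reachable_vertexIndex v).edge hedge).exists_vertexIndex_eq

end VertexIndex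

/-- The finite part of the infinite circuit reachable from the summands of the non-adjacent form of
`N`, which are marked with their signs. -/
noncomputable def nafCircuit (N : ℤ) : PowerCircuit where
  n := {b | Reachable N b}.ncard
  npos := (Set.ncard_pos (Reachable.finite N)).2 ⟨0, Reachable.zero N⟩
  lab u v := edgeLabel (vertexIndex N u) (vertexIndex N v)
  labValid _ _ := edgeLabel_eq_zero_or _ _
  acyclic := Subrelation.wf lt_of_edgeLabel_ne_zero (InvImage.wf (vertexIndex N) wellFounded_lt)
  M := {v | vertexCoeff N (vertexIndex N v) ≠ 0}
  Mne := by
    obtain ⟨b, hb⟩ := exists_vertexCoeff_ne_zero N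
    obtain ⟨v, rfl⟩ := (Reachable.mark hb).exists_vertexIndex_eq
    exact ⟨v, by simpa using hb⟩
  nu v := vertexCoeff N (vertexIndex N v)
  nuValid v hv := (vertexCoeff_eq_zero_or _ _).resolve_left (by simpa using hv)
  eval v := vertexValue (vertexIndex N v)
  evalSpec v := by
    simp only [forall_edgeLabel_vertexIndex_eq_zero_iff]
    split_ifs with hv
    · simp [hv, vertexValue]
    · obtain ⟨i, hi⟩ := Nat.exists_eq_succ_of_ne_zero hv
      rw [sum_edgeLabel_mul_vertexValue hi]
      simp [hi, vertexValue]

section NafCircuit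

variable {N : ℤ}

theorem mem_M_nafCircuit {v : Fin (nafCircuit N).n} :
    v ∈ (nafCircuit N).M ↔ vertexCoeff N (vertexIndex N v) ≠ 0 :=
  Finset.mem_filter_univ v

theorem isZeroVertex_nafCircuit_iff {v : Fin (nafCircuit N).n} :
    (nafCircuit N).IsZeroVertex v ↔ vertexIndex N v = 0 :=
  forall_edgeLabel_vertexIndex_eq_zero_iff v

theorem nafCircuit_eval_injective (N : ℤ) : Function.Injective (nafCircuit N).eval :=
  Nat.cast_injective.comp (vertexValue_injective.comp (vertexIndex_injective N))

theorem separated_of_nafCircuit_lab_ne_zero {v w₁ w₂ : Fin (nafCircuit N).n}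
    (h₁ : (nafCircuit N).lab v w₁ ≠ 0) (h₂ : (nafCircuit N).lab v w₂ ≠ 0) (hne : w₁ ≠ w₂) :
    Separated (vertexIndex N w₁) (vertexIndex N w₂) :=
  separated_of_edgeLabel_ne_zero h₁ h₂ ((vertexIndex_injective N).ne hne)

theorem separated_of_mem_M_nafCircuit {v₁ v₂ : Fin (nafCircuit N).n}
    (h₁ : v₁ ∈ (nafCircuit N).M) (h₂ : v₂ ∈ (nafCircuit N).M) (hne : v₁ ≠ v₂) :
    Separated (vertexIndex N v₁) (vertexIndex N v₂) :=
  separated_of_vertexCoeff_ne_zero (mem_M_nafCircuit.1 h₁) (mem_M_nafCircuit.1 h₂)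
    ((vertexIndex_injective N).ne hne)

theorem nafCircuit_proper (N : ℤ) : (nafCircuit N).Proper :=
  fun _ ↦ ⟨_, rfl⟩

theorem nafCircuit_represents (N : ℤ) : (nafCircuit N).Represents N := by
  refine ⟨nafCircuit_proper N, ?_⟩
  rw [← sum_vertexCoeff_mul_vertexValue (vertexIndex_injective N)
    fun b hb ↦ (Reachable.mark hb).exists_vertexIndex_eq]
  refine Finset.sum_subset (Finset.subset_univ _) fun v _ hv ↦ ?_
  have hnu : (nafCircuit N).nu v = 0 := not_not.1 (mt mem_M_nafCircuit.2 hv)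
  simp [hnu]

theorem nafCircuit_trimmed (N : ℤ) : (nafCircuit N).Trimmed := by
  intro v
  have hv := reachable_vertexIndex v
  generalize hb : vertexIndex N v = b at hv
  induction hv generalizing v with
  | mark hmark => exact ⟨v, mem_M_nafCircuit.2 (hb ▸ hmark), .refl⟩
  | edge ha hab ih =>
    obtain ⟨u, rfl⟩ := ha.exists_vertexIndex_eq
    obtain ⟨m, hm, hmu⟩ := ih u rfl
    subst hb
    exact ⟨m, hm, hmu.tail hab⟩

theorem nafCircuit_zero_trivial : (nafCircuit 0).Trivial := by
  have hzero : {b | Reachable 0 b} = {0} :=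
    Set.Subset.antisymm (fun _ hb ↦ hb.eq_zero) (Set.singleton_subset_iff.2 (Reachable.zero 0))
  exact Set.ncard_eq_one.2 ⟨0, hzero⟩

theorem nafCircuit_standardForm (N : ℤ) : (nafCircuit N).StandardForm := by
  refine ⟨nafCircuit_trimmed N, ?_, ?_, fun v z hz hvz w hvw ↦ ?_⟩
  · obtain ⟨z, hz⟩ := (Reachable.zero N).exists_vertexIndex_eq
    refine ⟨z, isZeroVertex_nafCircuit_iff.2 hz, fun y hy ↦ vertexIndex_injective N ?_⟩
    rw [hz, isZeroVertex_nafCircuit_iff.1 hy]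
  · rcases eq_or_ne N 0 with rfl | hN
    · exact Or.inl nafCircuit_zero_trivial
    · refine Or.inr fun z hz hzM ↦ mem_M_nafCircuit.1 hzM ?_
      rw [isZeroVertex_nafCircuit_iff.1 hz, vertexCoeff_zero_right hN]
  · by_contra hne
    obtain ⟨-, hpos, -⟩ := separated_of_nafCircuit_lab_ne_zero hvw hvz hne
    exact hpos.ne' (isZeroVertex_nafCircuit_iff.1 hz)

theorem nafCircuit_noRedundantPairs (N : ℤ) : (nafCircuit N).NoRedundantPairs :=
  fun _ _ _ hne _ _ _ ↦ (nafCircuit_eval_injective N).ne hne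

theorem nafCircuit_noSuperfluousPairs (N : ℤ) : (nafCircuit N).NoSuperfluousPairs :=
  fun _ _ _ hne h₁ h₂ _ ↦ (separated_of_nafCircuit_lab_ne_zero h₁ h₂ hne).vertexValue_ne_two_mul

theorem nafCircuit_reduced (N : ℤ) : (nafCircuit N).Reduced :=
  ⟨nafCircuit_standardForm N, fun _ _ h ↦ nafCircuit_eval_injective N h,
    nafCircuit_noRedundantPairs N, nafCircuit_noSuperfluousPairs N⟩

theorem nafCircuit_normalForm (N : ℤ) : (nafCircuit N).NormalForm :=
  ⟨nafCircuit_proper N, nafCircuit_reduced N,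
    fun _ _ _ _ h₁ h₂ hne ↦ (separated_of_nafCircuit_lab_ne_zero h₁ h₂ hne).two_le_abs_logb_sub,
    Or.inr fun _ h₁ _ h₂ hne ↦ (separated_of_mem_M_nafCircuit h₁ h₂ hne).two_le_abs_logb_sub⟩

end NafCircuit

end PowerCircuit

theorem normal_circuit_for_nat_general {N : ℤ} {m : ℕ} (hN : N.natAbs ≤ 2 ^ m) :
    ∃ P : PowerCircuit, P.NormalForm ∧ P.Represents N ∧ P.n ≤ m + 2 :=
  ⟨.nafCircuit N, PowerCircuit.nafCircuit_normalForm N, PowerCircuit.nafCircuit_represents N,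
    PowerCircuit.Reachable.ncard_le hN⟩

/-- Every natural number `n ≥ 1` is properly represented by a constant power
circuit in normal form with at most `⌈log₂ n⌉ + 2` vertices. -/
theorem normal_circuit_for_nat (n : ℕ) (hn : 1 ≤ n) :
    ∃ P : PowerCircuit, P.NormalForm ∧ P.Represents (n : ℤ) ∧
      P.n ≤ Nat.clog 2 n + 2 :=
  normal_circuit_for_nat_general (Nat.le_pow_clog one_lt_two n)
end

section
/- For every i ∈ ℕ, every constant power circuit that properly represents the number N_i = (4^{i+1} − 1)/3 has at least i + 1 vertices. -/
/-!
In a proper circuit every vertex evaluates to `0` or to a power of two, so `ℰ(P)` is a sum of at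
most `|M|` signed powers of two.  It remains to see that `N_i` needs `i + 1` of them.  Among the
summands of such a sum, those other than `±1` can be halved, and the summands `±1` pay for
rounding: if `2m` is a sum of `k` signed powers, so is `m`, and if `2m + 1` is one, then `m` or
`m + 1` gets by with fewer than `k`.  Since `N_{i+1} = 4 N_i + 1`, two halvings lead from `N_{i+1}`
to `N_i` or to `N_i + 1` and cost at least one summand, and the same holds starting from
`N_{i+1} + 1 = 4 N_i + 2`, so an induction on `i` treating `N_i` and `N_i + 1` together goes
through.
-/

/-- `IsSignedTwoPowSum k N` says that `N` is a sum of at most `k` signed powers of two `±2 ^ a`,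
repetitions allowed. A signed power of two is encoded as an integer `t` with `|t| = 2 ^ a`.
Letting `zero` hold for every `k` is what makes `k` an upper bound rather than the exact number. -/
inductive IsSignedTwoPowSum : ℕ → ℤ → Prop
  | zero (k : ℕ) : IsSignedTwoPowSum k 0
  | add {k a : ℕ} {N t : ℤ} (hN : IsSignedTwoPowSum k N) (ht : |t| = 2 ^ a) :
      IsSignedTwoPowSum (k + 1) (N + t)

namespace IsSignedTwoPowSum

variable {k l : ℕ} {m x N : ℤ}

theorem mono (h : IsSignedTwoPowSum k N) (hkl : k ≤ l) : IsSignedTwoPowSum l N := by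
  induction h generalizing l with
  | zero => exact .zero l
  | add _ ht ih =>
    obtain ⟨l, rfl⟩ := Nat.exists_eq_add_of_le' (Nat.one_le_of_lt hkl)
    exact (ih (by omega)).add ht

theorem finset_sum {ι : Type*} (s : Finset ι) (f : ι → ℤ)
    (hf : ∀ i ∈ s, f i = 0 ∨ ∃ a : ℕ, |f i| = 2 ^ a) :
    IsSignedTwoPowSum s.card (∑ i ∈ s, f i) := by
  induction s using Finset.cons_induction with
  | empty => exact .zero _
  | cons i s hi ih =>
    have hs := ih fun j hj => hf j (Finset.mem_cons_of_mem hj)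
    rw [Finset.card_cons, Finset.sum_cons, add_comm (f i)]
    rcases hf i (Finset.mem_cons_self i s) with hfi | ⟨a, hfi⟩
    · rw [hfi, add_zero]
      exact hs.mono (Nat.le_succ _)
    · exact hs.add hfi

theorem add_natCast (h : IsSignedTwoPowSum k x) (d : ℕ) : IsSignedTwoPowSum (k + d) (x + d) := by
  induction d with
  | zero => simpa using h
  | succ d ih =>
    rw [Nat.cast_succ, ← add_assoc, ← add_assoc]
    exact ih.add (a := 0) (by simp)

theorem sub_natCast (h : IsSignedTwoPowSum k x) (d : ℕ) : IsSignedTwoPowSum (k + d) (x - d) := by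
  induction d with
  | zero => simpa using h
  | succ d ih =>
    rw [Nat.cast_succ, ← sub_sub, ← add_assoc]
    exact ih.add (t := -1) (a := 0) (by simp)

theorem of_abs_sub_add_le (h : IsSignedTwoPowSum k x) (hl : |N - x| + k ≤ l) :
    IsSignedTwoPowSum l N := by
  obtain ⟨d, hd⟩ := Int.eq_ofNat_of_zero_le (abs_nonneg (N - x))
  have hkl : k + d ≤ l := by omega
  rcases (abs_eq (Int.natCast_nonneg d)).mp hd with hN | hN
  · exact (by omega : N = x + d) ▸ (h.add_natCast d).mono hkl
  · exact (by omega : N = x - d) ▸ (h.sub_natCast d).mono hkl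

/- `x` collects the halves of the even summands, and `|N - 2 * x|` is at most the number of
summands `±1`. -/
theorem exists_abs_sub_two_mul_add_le (h : IsSignedTwoPowSum k N) :
    ∃ (j : ℕ) (x : ℤ), IsSignedTwoPowSum j x ∧ |N - 2 * x| + j ≤ k := by
  induction h with
  | zero k => exact ⟨0, 0, .zero 0, by simp⟩
  | @add k a N t _ ht ih =>
    obtain ⟨j, x, hx, hk⟩ := ih
    cases a with
    | zero =>
      refine ⟨j, x, hx, ?_⟩
      have := abs_add_le (N - 2 * x) t
      grind
    | succ a =>
      obtain ⟨t', rfl⟩ : 2 ∣ t := (dvd_abs 2 t).mp (ht ▸ dvd_pow_self 2 a.succ_ne_zero)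
      have ht' : |t'| = 2 ^ a := by
        rw [abs_mul, abs_two, pow_succ'] at ht
        omega
      refine ⟨j + 1, x + t', hx.add ht', ?_⟩
      rw [show N + 2 * t' - 2 * (x + t') = N - 2 * x by ring]
      omega

theorem of_two_mul (h : IsSignedTwoPowSum k (2 * m)) : IsSignedTwoPowSum k m := by
  obtain ⟨j, x, hx, hk⟩ := h.exists_abs_sub_two_mul_add_le
  exact hx.of_abs_sub_add_le (by grind)

theorem exists_lt_of_two_mul_add_one (h : IsSignedTwoPowSum k (2 * m + 1)) :
    ∃ j < k, IsSignedTwoPowSum j m ∨ IsSignedTwoPowSum j (m + 1) := by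
  obtain ⟨j, x, hx, hk⟩ := h.exists_abs_sub_two_mul_add_le
  refine ⟨k - 1, by grind, ?_⟩
  rcases le_or_gt x m with hxm | hmx
  · exact .inl (hx.of_abs_sub_add_le (by grind))
  · exact .inr (hx.of_abs_sub_add_le (by grind))

theorem exists_lt_of_four_mul_add_one (h : IsSignedTwoPowSum k (4 * m + 1)) :
    ∃ j < k, IsSignedTwoPowSum j m ∨ IsSignedTwoPowSum j (m + 1) := by
  rw [show 4 * m + 1 = 2 * (2 * m) + 1 by ring] at h
  obtain ⟨j, hjk, h | h⟩ := h.exists_lt_of_two_mul_add_one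
  · exact ⟨j, hjk, .inl h.of_two_mul⟩
  · obtain ⟨l, hlj, h⟩ := h.exists_lt_of_two_mul_add_one
    exact ⟨l, hlj.trans hjk, h⟩

theorem exists_lt_of_four_mul_add_two (h : IsSignedTwoPowSum k (4 * m + 2)) :
    ∃ j < k, IsSignedTwoPowSum j m ∨ IsSignedTwoPowSum j (m + 1) := by
  rw [show 4 * m + 2 = 2 * (2 * m + 1) by ring] at h
  exact h.of_two_mul.exists_lt_of_two_mul_add_one

theorem le_of_geom_sum_four {n : ℕ}
    (h : IsSignedTwoPowSum k (∑ j ∈ Finset.range n, 4 ^ j) ∨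
      IsSignedTwoPowSum k (∑ j ∈ Finset.range n, 4 ^ j + 1)) :
    n ≤ k := by
  induction n generalizing k with
  | zero => exact k.zero_le
  | succ n ih =>
    rw [geom_sum_succ, add_assoc, one_add_one_eq_two] at h
    obtain ⟨j, hjk, h⟩ := h.elim exists_lt_of_four_mul_add_one exists_lt_of_four_mul_add_two
    exact (ih h).trans_lt hjk

end IsSignedTwoPowSum

theorem exists_eq_pow_of_zpow_eq_natCast {K : Type*} [Field K] [LinearOrder K]
    [IsStrictOrderedRing K] {b m : ℕ} {z : ℤ} (hb : 1 < b) (h : (b : K) ^ z = m) :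
    ∃ a : ℕ, m = b ^ a := by
  have hb' : (1 : K) < b := by exact_mod_cast hb
  have hm : (0 : K) < m := h ▸ zpow_pos (zero_lt_one.trans hb') z
  have hz : 0 ≤ z := by
    rw [← one_le_zpow_iff_right₀ hb', h]
    exact_mod_cast hm
  lift z to ℕ using hz
  exact ⟨z, by exact_mod_cast h.symm⟩

namespace PowerCircuit

variable {P : PowerCircuit}

theorem eq_zero_or_eq_two_pow_of_eval_eq {e : Fin P.n → ℕ} (he : ∀ v, P.eval v = e v)
    (v : Fin P.n) : e v = 0 ∨ ∃ a : ℕ, e v = 2 ^ a := by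
  have hv := P.evalSpec v
  split_ifs at hv
  · exact .inl (by exact_mod_cast (he v).symm.trans hv)
  · have hexp : ∑ w, (P.lab v w : ℝ) * P.eval w = (∑ w, P.lab v w * e w : ℤ) := by
      push_cast [he]
      rfl
    rw [hexp, Real.rpow_intCast, he] at hv
    exact .inr <| exists_eq_pow_of_zpow_eq_natCast (K := ℝ) one_lt_two (by exact_mod_cast hv.symm)

theorem Proper.exists_isSignedTwoPowSum_value_eq (hP : P.Proper) :
    ∃ N : ℤ, IsSignedTwoPowSum P.M.card N ∧ P.value = N := by
  choose e he using hP
  refine ⟨∑ v ∈ P.M, P.nu v * e v, .finset_sum _ _ fun v hv => ?_, by simp [value, he]⟩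
  have hnu : |P.nu v| = 1 := (abs_eq zero_le_one).mpr (P.nuValid v hv)
  rcases eq_zero_or_eq_two_pow_of_eval_eq he v with h | ⟨a, h⟩
  · exact .inl (by simp [h])
  · exact .inr ⟨a, by simp [h, abs_mul, hnu]⟩

end PowerCircuit

/-- Every constant power circuit properly representing `N_i = (4^(i+1) - 1)/3`
has at least `i + 1` vertices. The condition `3 · ℰ(P) = 4^(i+1) - 1` states
exactly that `ℰ(P) = N_i`. -/
theorem circuit_for_N_i_has_many_vertices (i : ℕ) (P : PowerCircuit)
    (hP : P.Proper) (hval : 3 * P.value = 4 ^ (i + 1) - 1) :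
    i + 1 ≤ P.n := by
  obtain ⟨N, hN, hPN⟩ := hP.exists_isSignedTwoPowSum_value_eq
  have hN4 : N * (4 - 1) = 4 ^ (i + 1) - 1 := by
    rw [hPN] at hval
    have : 3 * N = 4 ^ (i + 1) - 1 := by exact_mod_cast hval
    linarith
  have hN_geom : N = ∑ j ∈ Finset.range (i + 1), 4 ^ j :=
    mul_right_cancel₀ (by norm_num) (hN4.trans (geom_sum_mul 4 (i + 1)).symm)
  calc i + 1 ≤ P.M.card := IsSignedTwoPowSum.le_of_geom_sum_four (.inl (hN_geom ▸ hN))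
    _ ≤ P.n := card_finset_fin_le P.M
end
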